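/- For every n ≥ 1 and every noncrossing partition π ∈ NC(n): Σ_{t ∈ ST(n), π(t) = π} ω(sk(t)) = Σ_{σ ∈ NC_irr(n), π ⊑ σ} (−1)^{|π|−|σ|} ω(t(σ)), where π ⊑ σ means that every block of π is contained in a block of σ and the restriction of π to each block of σ is an interval partition of that block. -/

import Mathlib

open scoped BigOperators

/-- Planar rooted trees (rose trees). -/
inductive PTree : Type
  | node : List PTree → PTree

namespace PTree

/-- The single-vertex tree (a leaf). -/
abbrev leaf : PTree := .node []

/-- Subtree at a given path from the root (entries select children). -/
def subtreeAt : List ℕ → PTree → Option PTree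
  | [], t => some t
  | i :: p, node cs => (cs[i]?).bind (subtreeAt p)

/-- `p` is (the path of) a vertex of `t`. -/
def IsVertex (t : PTree) (p : List ℕ) : Prop := (subtreeAt p t).isSome

/-- `p` is a leaf of `t`. -/
def IsLeafAt (t : PTree) (p : List ℕ) : Prop := subtreeAt p t = some leaf

/-- `p` is an internal (non-leaf) vertex of `t`. -/
def IsInternalAt (t : PTree) (p : List ℕ) : Prop :=
  ∃ cs, subtreeAt p t = some (node cs) ∧ cs ≠ []

/-- Schröder trees: every internal vertex has at least two children. -/
inductive IsSchroder : PTree → Prop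
  | leaf : IsSchroder (node [])
  | node (cs : List PTree) : 2 ≤ cs.length → (∀ c ∈ cs, IsSchroder c) → IsSchroder (node cs)

/-- Number of leaves of a tree. -/
noncomputable def numLeaves (t : PTree) : ℕ := Nat.card {p : List ℕ // IsLeafAt t p}

/-- Number of sectors between consecutive leaves. -/
noncomputable def numSectors (t : PTree) : ℕ := numLeaves t - 1

/-- Number of internal vertices. -/
noncomputable def numInternal (t : PTree) : ℕ := Nat.card {p : List ℕ // IsInternalAt t p}

/-- The set of Schröder trees with `n+1` leaves. -/
def ST (n : ℕ) : Set PTree := {t | IsSchroder t ∧ numLeaves t = n + 1}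

/-- Number of surjective strictly order-preserving maps from the poset of internal
vertices of `t` (i.e. the vertex poset of the skeleton `sk(t)`, with the root minimal,
the order being the ancestor/prefix order) onto `{1, …, k}`. This is `ω_k(sk(t))`. -/
noncomputable def omegaSkK (t : PTree) (k : ℕ) : ℕ :=
  Nat.card {f : {p : List ℕ // IsInternalAt t p} → Fin k //
    Function.Surjective f ∧ ∀ v w, v.1 <+: w.1 → v ≠ w → f v < f w}

/-- The Murua coefficient `ω(sk(t))` of the skeleton of `t`. -/
noncomputable def omegaSk (t : PTree) : ℂ :=
  ∑ k ∈ Finset.Icc 1 (numInternal t), ((-1 : ℂ) ^ (k + 1) / (k : ℂ)) * (omegaSkK t k : ℂ)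

/-- The subtree of `t` at path `p` (junk value: a leaf). -/
noncomputable def subtree! (t : PTree) (p : List ℕ) : PTree := (subtreeAt p t).getD leaf

/-- Number of leaves of `t` strictly to the left of the subtree at `p`. -/
noncomputable def leavesBefore (t : PTree) (p : List ℕ) : ℕ :=
  Nat.card {q : List ℕ // IsLeafAt t q ∧ List.Lex (· < ·) q p ∧ ¬ p <+: q}

/-- Sector number `i` (0-indexed: the sector between the `(i+1)`-st and `(i+2)`-nd leaves of `t`)
lies strictly inside the subtree of `t` rooted at `p`. -/
def SectorIn (t : PTree) (p : List ℕ) (i : ℕ) : Prop :=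
  leavesBefore t p ≤ i ∧ i + 2 ≤ leavesBefore t p + numLeaves (subtree! t p)

/-- The internal vertex `v` of `t` owns sector `i`: the sector lies in the corolla at `v`,
i.e. inside the subtree at `v` but not inside the subtree at any strictly deeper vertex. -/
def OwnsSector (t : PTree) (v : List ℕ) (i : ℕ) : Prop :=
  IsInternalAt t v ∧ SectorIn t v i ∧
    ∀ w, IsInternalAt t w → v <+: w → w ≠ v → ¬ SectorIn t w i

/-- Sectors `i` and `j` belong to the same block of the noncrossing partition `π(t)`. -/
def SameOwner (t : PTree) (i j : ℕ) : Prop := ∃ v, OwnsSector t v i ∧ OwnsSector t v j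

open Classical in
/-- `φ_{π(t)}(a_1,…,a_n)`: the product over the blocks of the noncrossing partition `π(t)`
(one block per internal vertex `v`, consisting of the sectors owned by `v`) of `φ` applied to
the ordered product of the corresponding letters of `w`. -/
noncomputable def phiPi {A : Type*} [Ring A] (φ : A → ℂ) (t : PTree) (w : List A) : ℂ :=
  ∏ᶠ v ∈ {v : List ℕ | IsInternalAt t v},
    φ ((((List.range w.length).filter fun i => OwnsSector t v i).map fun i => w.getD i 0).prod)

/-- A corolla: a root whose (at least two) children are all leaves. -/
def corolla (m : ℕ) : PTree := node (List.replicate m leaf)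

/-- `t` is a corolla. -/
def IsCorolla (t : PTree) : Prop := ∃ m, 2 ≤ m ∧ t = corolla m

/-- Graft a tree `s` onto the leftmost leaf of `t`. -/
def graftLeftmost : PTree → PTree → PTree
  | node [], s => s
  | node (c :: cs), s => node (graftLeftmost c s :: cs)

/-- Trees obtained from the single-vertex tree by repeatedly grafting a corolla
onto the leftmost leaf. -/
inductive IsBST : PTree → Prop
  | single : IsBST leaf
  | graft (t : PTree) (m : ℕ) : IsBST t → 2 ≤ m → IsBST (graftLeftmost t (corolla m))

/-- Schröder trees whose leftmost child of the root is a leaf. -/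
def IsPST (t : PTree) : Prop := ∃ cs, t = node (leaf :: cs)

end PTree
section Partitions

open scoped BigOperators

/-- Set partitions of `[n] = {1,…,n}`, modeled as finpartitions of `Fin n`. -/
abbrev NPart (n : ℕ) := Finpartition (Finset.univ : Finset (Fin n))

/-- Noncrossing partitions: there are no `a < b < c < d` with `a, c` in one block and
`b, d` in a different block. -/
def IsNoncrossing {n : ℕ} (π : NPart n) : Prop :=
  ∀ a b c d : Fin n, a < b → b < c → c < d →
    ∀ V ∈ π.parts, ∀ W ∈ π.parts, a ∈ V → c ∈ V → b ∈ W → d ∈ W → V = W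

/-- Interval partitions: every block is an interval of consecutive elements. -/
def IsIntervalPart {n : ℕ} (π : NPart n) : Prop :=
  ∀ V ∈ π.parts, ∀ x ∈ V, ∀ y ∈ V, ∀ z : Fin n, x ≤ z → z ≤ y → z ∈ V

/-- Irreducible noncrossing partitions: `1` and `n` lie in the same block. -/
def IsIrreducibleNC {n : ℕ} (π : NPart n) : Prop :=
  ∃ V ∈ π.parts, (∀ i : Fin n, i.val = 0 → i ∈ V) ∧ (∀ i : Fin n, i.val = n - 1 → i ∈ V)

/-- `W` is nested in `V`: every element of `W` lies in the interval `[min V, max V]`. -/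
def NestedIn {n : ℕ} (W V : Finset (Fin n)) : Prop :=
  ∀ w ∈ W, (∃ a ∈ V, a ≤ w) ∧ (∃ b ∈ V, w ≤ b)

open Classical in
/-- The forest factorial `t(π)!` of the forest of nestings of `π`: the product, over all
blocks `V`, of the number of blocks nested in `V` (the size of the subtree rooted at `V`). -/
noncomputable def forestFactorial {n : ℕ} (π : NPart n) : ℕ :=
  ∏ V ∈ π.parts, (π.parts.filter fun W => NestedIn W V).card

/-- `f_π(a_1,…,a_n)`: the product over the blocks `V = {i_1 < … < i_s}` of `π` of
`f(a_{i_1},…,a_{i_s})`, for a family of multilinear functionals encoded as `f : List A → ℂ`. -/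
noncomputable def blockApply {A : Type*} {n : ℕ} (f : List A → ℂ) (a : Fin n → A)
    (π : NPart n) : ℂ :=
  ∏ V ∈ π.parts, f ((V.sort (· ≤ ·)).map a)

/-- `φ_π(a_1,…,a_n)` for the moment functionals `φ_m(a_1,…,a_m) = φ(a_1 ⋯ a_m)`. -/
noncomputable def momApply {A : Type*} [Ring A] {n : ℕ} (φ : A → ℂ) (a : Fin n → A)
    (π : NPart n) : ℂ :=
  blockApply (fun l => φ l.prod) a π

/-- `ω_k(t(π))` for the nesting poset of the blocks of `π` (for irreducible `π`, this is
the vertex poset of the tree of nestings, rooted at the outermost block): the number of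
surjective strictly order-preserving maps onto `{1,…,k}`. -/
noncomputable def omegaNestK {n : ℕ} (π : NPart n) (k : ℕ) : ℕ :=
  Nat.card {f : {V // V ∈ π.parts} → Fin k // Function.Surjective f ∧
    ∀ V W : {V // V ∈ π.parts}, NestedIn W.1 V.1 → V ≠ W → f V < f W}

/-- The Murua coefficient `ω(t(π))` of the tree (forest) of nestings of `π`. -/
noncomputable def omegaNest {n : ℕ} (π : NPart n) : ℂ :=
  ∑ k ∈ Finset.Icc 1 π.parts.card, ((-1 : ℂ) ^ (k + 1) / (k : ℂ)) * (omegaNestK π k : ℂ)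

/-- The noncrossing partition `π(t)` associated to a Schröder tree `t ∈ ST(n)` equals `π`:
two sectors lie in the same block of `π(t)` (i.e. have the same owning internal vertex)
iff they lie in the same block of `π`. -/
def TreePartEq {n : ℕ} (t : PTree) (π : NPart n) : Prop :=
  ∀ i j : Fin n, PTree.SameOwner t i.val j.val ↔ ∃ V ∈ π.parts, i ∈ V ∧ j ∈ V

/-- The moment–cumulant relation defining the monotone cumulants `h`. -/
def MonotoneMC {A : Type*} [Ring A] (φ : A → ℂ) (h : List A → ℂ) : Prop :=
  ∀ (m : ℕ), 1 ≤ m → ∀ a : Fin m → A,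
    φ (List.ofFn a).prod =
      ∑ᶠ π ∈ {π : NPart m | IsNoncrossing π}, (forestFactorial π : ℂ)⁻¹ * blockApply h a π

/-- The moment–cumulant relation defining the free cumulants `r`. -/
def FreeMC {A : Type*} [Ring A] (φ : A → ℂ) (r : List A → ℂ) : Prop :=
  ∀ (m : ℕ), 1 ≤ m → ∀ a : Fin m → A,
    φ (List.ofFn a).prod = ∑ᶠ π ∈ {π : NPart m | IsNoncrossing π}, blockApply r a π

/-- The moment–cumulant relation defining the Boolean cumulants `b`. -/
def BooleanMC {A : Type*} [Ring A] (φ : A → ℂ) (b : List A → ℂ) : Prop :=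
  ∀ (m : ℕ), 1 ≤ m → ∀ a : Fin m → A,
    φ (List.ofFn a).prod = ∑ᶠ π ∈ {π : NPart m | IsIntervalPart π}, blockApply b a π

end Partitions

/-- The relation `π ⊑ σ`: every block of `π` is contained in a block of `σ`, and the
restriction of `π` to each block of `σ` is an interval partition of that block. -/
def SqSubseteq {n : ℕ} (π σ : NPart n) : Prop :=
  (∀ V ∈ π.parts, ∃ W ∈ σ.parts, V ⊆ W) ∧
  (∀ W ∈ σ.parts, ∀ V ∈ π.parts, V ⊆ W →
    ∀ x ∈ V, ∀ y ∈ V, ∀ z ∈ W, x ≤ z → z ≤ y → z ∈ V)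

theorem card_surjective_subtype_eq_zero {P : Type*} [Finite P] {k : ℕ} (hk : Nat.card P < k)
    (Q : (P → Fin k) → Prop) : Nat.card {f : P → Fin k // Function.Surjective f ∧ Q f} = 0 := by
  have : IsEmpty {f : P → Fin k // Function.Surjective f ∧ Q f} :=
    ⟨fun f => by
      have := Nat.card_le_card_of_surjective f.1 f.2.1
      simp at this
      omega⟩
  exact Nat.card_of_isEmpty

open Polynomial in
theorem coeff_one_descPochhammer (k : ℕ) :
    (descPochhammer ℂ (k + 1)).coeff 1 = (-1) ^ k * (k.factorial : ℂ) := by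
  have key : ∀ k : ℕ, (descPochhammer ℂ k).eval (-1) = (-1) ^ k * (k.factorial : ℂ) := by
    intro k
    induction k with
    | zero => simp
    | succ k ih =>
      rw [descPochhammer_succ_right, eval_mul, ih, Nat.factorial_succ]
      simp only [eval_sub, eval_X, eval_natCast]
      push_cast
      ring
  rw [descPochhammer_succ_left, coeff_X_mul, coeff_zero_eq_eval_zero, eval_comp, ← key k]
  simp

section StrictMaps

variable {P : Type*}

/-- Number of surjections `P → {1, …, k}` that are strictly monotone along `lt`. -/
noncomputable def strictSurjCount (lt : P → P → Prop) (k : ℕ) : ℕ :=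
  Nat.card {f : P → Fin k // Function.Surjective f ∧ ∀ v w, lt v w → f v < f w}

theorem strictSurjCount_eq_zero [Finite P] (lt : P → P → Prop) {k : ℕ} (hk : Nat.card P < k) :
    strictSurjCount lt k = 0 :=
  card_surjective_subtype_eq_zero hk _

open Classical in
theorem card_strictMaps_image_eq (lt : P → P → Prop) (N : ℕ) (S : Finset (Fin N)) :
    Nat.card {f : P → Fin N // (∀ v w, lt v w → f v < f w) ∧ Set.range f = (S : Set (Fin N))} =
      strictSurjCount lt S.card := by
  let e := S.orderIsoOfFin rfl
  refine Nat.card_congr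
    { toFun := fun f => ⟨fun p => e.symm ⟨f.1 p, by
          have : f.1 p ∈ Set.range f.1 := ⟨p, rfl⟩
          rw [f.2.2] at this
          exact this⟩, ?_, ?_⟩
      invFun := fun g => ⟨fun p => (e (g.1 p) : Fin N), ?_, ?_⟩
      left_inv := ?_
      right_inv := ?_ }
  · intro i
    have : ((e i : S) : Fin N) ∈ Set.range f.1 := by
      rw [f.2.2]
      exact (e i).2
    obtain ⟨p, hp⟩ := this
    refine ⟨p, ?_⟩
    rw [OrderIso.symm_apply_eq]
    exact Subtype.ext hp
  · intro v w h
    rw [OrderIso.lt_iff_lt]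
    exact f.2.1 v w h
  · intro v w h
    exact e.lt_iff_lt.2 (g.2.2 v w h)
  · ext x
    constructor
    · rintro ⟨p, rfl⟩
      exact (e (g.1 p)).2
    · intro hx
      obtain ⟨p, hp⟩ := g.2.1 (e.symm ⟨x, hx⟩)
      exact ⟨p, by simp [hp]⟩
  · intro f
    ext p
    simp
  · intro g
    ext p
    simp

theorem card_strictMaps_eq_sum [Finite P] (lt : P → P → Prop) (N : ℕ) :
    Nat.card {f : P → Fin N // ∀ v w, lt v w → f v < f w} =
      ∑ k ∈ Finset.range (Nat.card P + 1), N.choose k * strictSurjCount lt k := by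
  classical
  have := Fintype.ofFinite P
  have h1 : Nat.card {f : P → Fin N // ∀ v w, lt v w → f v < f w} =
      ∑ S ∈ (Finset.univ : Finset (Fin N)).powerset, strictSurjCount lt S.card := by
    rw [Nat.card_eq_fintype_card, Fintype.card_subtype,
      Finset.card_eq_sum_card_fiberwise (f := fun f => Finset.univ.image f)
        (t := (Finset.univ : Finset (Fin N)).powerset) (by intro x _; simp)]
    refine Finset.sum_congr rfl fun S _ => ?_
    rw [← card_strictMaps_image_eq, Nat.card_eq_fintype_card, Fintype.card_subtype,
      Finset.filter_filter]
    congr 1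
    ext f
    simp [← Finset.coe_inj]
  rw [h1, Finset.sum_powerset_apply_card]
  simp only [Finset.card_univ, Fintype.card_fin, smul_eq_mul]
  have h2 := Finset.sum_subset (Finset.range_subset_range.2
      (le_max_left (N + 1) (Nat.card P + 1)))
      (f := fun k => N.choose k * strictSurjCount lt k) (fun k _ hk => by
        rw [Nat.choose_eq_zero_of_lt (by simpa using hk), zero_mul])
  have h3 := Finset.sum_subset (Finset.range_subset_range.2
      (le_max_right (N + 1) (Nat.card P + 1)))
      (f := fun k => N.choose k * strictSurjCount lt k) (fun k _ hk => by
        rw [strictSurjCount_eq_zero lt (by simpa using hk), mul_zero])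
  rw [h2, h3]

open Polynomial in
/-- The strict order polynomial. -/
noncomputable def strictOrderPoly (lt : P → P → Prop) : ℂ[X] :=
  ∑ k ∈ Finset.range (Nat.card P + 1),
    C ((strictSurjCount lt k : ℂ) / (k.factorial : ℂ)) * descPochhammer ℂ k

open Polynomial in
theorem eval_strictOrderPoly [Finite P] (lt : P → P → Prop) (N : ℕ) :
    (strictOrderPoly lt).eval (N : ℂ) =
      Nat.card {f : P → Fin N // ∀ v w, lt v w → f v < f w} := by
  rw [card_strictMaps_eq_sum, strictOrderPoly, eval_finsetSum]
  push_cast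
  refine Finset.sum_congr rfl fun k _ => ?_
  rw [eval_mul, eval_C, descPochhammer_eval_eq_descFactorial,
    Nat.descFactorial_eq_factorial_mul_choose]
  have : (k.factorial : ℂ) ≠ 0 := by exact_mod_cast k.factorial_ne_zero
  push_cast
  field_simp

theorem coeff_one_strictOrderPoly (lt : P → P → Prop) :
    (strictOrderPoly lt).coeff 1 =
      ∑ k ∈ Finset.Icc 1 (Nat.card P), ((-1 : ℂ) ^ (k + 1) / (k : ℂ)) * strictSurjCount lt k := by
  have hI : Finset.Icc 1 (Nat.card P) =
      (Finset.range (Nat.card P)).map ⟨(· + 1), add_left_injective 1⟩ := by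
    ext k
    simp only [Finset.mem_Icc, Finset.mem_map, Finset.mem_range, Function.Embedding.coeFn_mk]
    exact ⟨fun h => ⟨k - 1, by omega, by omega⟩, by rintro ⟨a, h, rfl⟩; omega⟩
  rw [strictOrderPoly, Polynomial.finsetSum_coeff, Finset.sum_range_succ', hI, Finset.sum_map]
  simp only [Polynomial.coeff_C_mul, coeff_one_descPochhammer, descPochhammer_zero,
    Polynomial.coeff_one, one_ne_zero, if_false, mul_zero, add_zero, Function.Embedding.coeFn_mk]
  refine Finset.sum_congr rfl fun k _ => ?_
  have : (k.factorial : ℂ) ≠ 0 := by exact_mod_cast k.factorial_ne_zero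
  have h' : (k : ℂ) + 1 ≠ 0 := by exact_mod_cast k.succ_ne_zero
  rw [Nat.factorial_succ]
  push_cast
  field_simp
  ring

theorem coeff_zero_strictOrderPoly [Finite P] [Nonempty P] (lt : P → P → Prop) :
    (strictOrderPoly lt).coeff 0 = 0 := by
  rw [Polynomial.coeff_zero_eq_eval_zero]
  have := eval_strictOrderPoly lt 0
  rw [Nat.cast_zero] at this
  rw [this]
  simp

/-- The Murua coefficient of a disconnected poset vanishes. -/
theorem sum_strictSurjCount_eq_zero_of_disconnected [Finite P] (lt : P → P → Prop) (S : P → Prop)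
    (h1 : ∃ p, S p) (h2 : ∃ p, ¬ S p) (h : ∀ v w, lt v w → (S v ↔ S w)) :
    ∑ k ∈ Finset.Icc 1 (Nat.card P),
      ((-1 : ℂ) ^ (k + 1) / (k : ℂ)) * strictSurjCount lt k = 0 := by
  classical
  have : Nonempty {p // S p} := nonempty_subtype.2 h1
  have : Nonempty {p // ¬ S p} := nonempty_subtype.2 h2
  have hmul : strictOrderPoly lt =
      strictOrderPoly (fun v w : {p // S p} => lt v w) *
        strictOrderPoly (fun v w : {p // ¬ S p} => lt v w) := by
    apply Polynomial.eq_of_infinite_eval_eq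
    refine (Set.infinite_range_of_injective (Nat.cast_injective (R := ℂ))).mono ?_
    rintro _ ⟨N, rfl⟩
    simp only [Set.mem_ofPred_eq, Polynomial.eval_mul, eval_strictOrderPoly]
    norm_cast
    rw [← Nat.card_prod]
    refine Nat.card_congr
      { toFun := fun f => (⟨fun p => f.1 p, fun v w => f.2 v w⟩, ⟨fun p => f.1 p, fun v w => f.2 v w⟩)
        invFun := fun g => ⟨fun p => if hp : S p then g.1.1 ⟨p, hp⟩ else g.2.1 ⟨p, hp⟩, ?_⟩
        left_inv := ?_
        right_inv := ?_ }
    · intro v w hvw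
      by_cases hv : S v
      · have hw := (h v w hvw).1 hv
        simpa [hv, hw] using g.1.2 ⟨v, hv⟩ ⟨w, hw⟩ hvw
      · have hw : ¬ S w := fun hw => hv ((h v w hvw).2 hw)
        simpa [hv, hw] using g.2.2 ⟨v, hv⟩ ⟨w, hw⟩ hvw
    · intro f
      ext p
      by_cases hp : S p <;> simp [hp]
    · intro g
      ext p
      · simp [p.2]
      · simp [p.2]
  rw [← coeff_one_strictOrderPoly, hmul, Polynomial.mul_coeff_one, coeff_zero_strictOrderPoly,
    coeff_zero_strictOrderPoly]
  simp

end StrictMaps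

section LevelPartitions

variable {n : ℕ}

/-- Two elements lie in the same block of `π`. -/
def NPart.Rel (π : NPart n) (i j : Fin n) : Prop := ∃ V ∈ π.parts, i ∈ V ∧ j ∈ V

namespace NPart

theorem rel_iff_part_eq {π : NPart n} {i j : Fin n} : π.Rel i j ↔ π.part i = π.part j := by
  rw [Rel, ← π.mem_part_iff_exists, π.mem_part_iff_part_eq_part (Finset.mem_univ _)
    (Finset.mem_univ _)]

theorem Rel.refl (π : NPart n) (i : Fin n) : π.Rel i i := rel_iff_part_eq.2 rfl

theorem Rel.symm {π : NPart n} {i j : Fin n} (h : π.Rel i j) : π.Rel j i :=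
  rel_iff_part_eq.2 (rel_iff_part_eq.1 h).symm

theorem Rel.trans {π : NPart n} {i j k : Fin n} (h : π.Rel i j) (h' : π.Rel j k) : π.Rel i k :=
  rel_iff_part_eq.2 ((rel_iff_part_eq.1 h).trans (rel_iff_part_eq.1 h'))

theorem rel_of_mem {π : NPart n} {V : Finset (Fin n)} (hV : V ∈ π.parts) {i j : Fin n}
    (hi : i ∈ V) (hj : j ∈ V) : π.Rel i j := ⟨V, hV, hi, hj⟩

theorem mem_of_rel {π : NPart n} {V : Finset (Fin n)} (hV : V ∈ π.parts) {i j : Fin n}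
    (hi : i ∈ V) (h : π.Rel i j) : j ∈ V := by
  obtain ⟨W, hW, hi', hj⟩ := h
  rwa [π.eq_of_mem_parts hV hW hi hi']

theorem mem_part_iff_rel {π : NPart n} {i j : Fin n} : j ∈ π.part i ↔ π.Rel i j := by
  rw [π.mem_part_iff_exists]
  exact ⟨fun ⟨V, hV, h1, h2⟩ => ⟨V, hV, h2, h1⟩, fun ⟨V, hV, h1, h2⟩ => ⟨V, hV, h2, h1⟩⟩

theorem le_iff_rel {π σ : NPart n} :
    (∀ V ∈ π.parts, ∃ W ∈ σ.parts, V ⊆ W) ↔ ∀ i j, π.Rel i j → σ.Rel i j := by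
  constructor
  · rintro h i j ⟨V, hV, hi, hj⟩
    obtain ⟨W, hW, hVW⟩ := h V hV
    exact ⟨W, hW, hVW hi, hVW hj⟩
  · intro h V hV
    obtain ⟨i, hi⟩ := π.nonempty_of_mem_parts hV
    refine ⟨σ.part i, σ.part_mem.2 (Finset.mem_univ _), fun j hj => ?_⟩
    exact mem_part_iff_rel.2 (h i j (rel_of_mem hV hi hj))

theorem ext_rel {π σ : NPart n} (h : ∀ i j, π.Rel i j ↔ σ.Rel i j) : π = σ :=
  le_antisymm (a := π) (le_iff_rel.2 fun i j => (h i j).1) (le_iff_rel.2 fun i j => (h i j).2)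

open Classical in
theorem exists_rel_iff (s : Setoid (Fin n)) : ∃ π : NPart n, ∀ i j, π.Rel i j ↔ s i j :=
  ⟨Finpartition.ofSetoid s, fun i j => by
    rw [← mem_part_iff_rel, Finpartition.mem_part_ofSetoid_iff_rel]⟩

open Classical in
/-- The maxima of the blocks of `σ`. -/
noncomputable def blockMaxes (σ : NPart n) : Finset (Fin n) :=
  Finset.univ.filter fun i => ∀ j, σ.Rel i j → j ≤ i

theorem mem_blockMaxes {σ : NPart n} {i : Fin n} :
    i ∈ σ.blockMaxes ↔ ∀ j, σ.Rel i j → j ≤ i := by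
  simp [blockMaxes]

theorem exists_blockMaxes_rel (σ : NPart n) (i : Fin n) :
    ∃ e ∈ σ.blockMaxes, σ.Rel i e ∧ i ≤ e := by
  have hi : i ∈ σ.part i := mem_part_iff_rel.2 (Rel.refl σ i)
  have hm := (σ.part i).max'_mem ⟨i, hi⟩
  refine ⟨(σ.part i).max' ⟨i, hi⟩, mem_blockMaxes.2 fun j hj => ?_, mem_part_iff_rel.1 hm,
    Finset.le_max' _ _ hi⟩
  exact Finset.le_max' _ _ (mem_part_iff_rel.2 ((mem_part_iff_rel.1 hm).trans hj))

theorem card_blockMaxes (σ : NPart n) : σ.blockMaxes.card = σ.parts.card := by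
  refine Finset.card_bij (fun i _ => σ.part i) (fun i _ => σ.part_mem.2 (Finset.mem_univ _)) ?_ ?_
  · intro i hi j hj hij
    have hij := rel_iff_part_eq.2 hij
    exact le_antisymm (mem_blockMaxes.1 hj _ hij.symm) (mem_blockMaxes.1 hi _ hij)
  · intro V hV
    obtain ⟨i, hi⟩ := σ.nonempty_of_mem_parts hV
    obtain ⟨e, he, hie, -⟩ := exists_blockMaxes_rel σ i
    exact ⟨e, he, σ.part_eq_of_mem hV (mem_of_rel hV hi hie)⟩

end NPart

variable {α : Type*} [LinearOrder α]

/-- Positions `i`, `j` carry the same letter of `w` and no letter between them is smaller. -/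
def LevelRel (w : Fin n → α) (i j : Fin n) : Prop :=
  w i = w j ∧ ∀ l, min i j ≤ l → l ≤ max i j → w i ≤ w l

theorem LevelRel.symm {w : Fin n → α} {i j : Fin n} (h : LevelRel w i j) : LevelRel w j i :=
  ⟨h.1.symm, fun l h1 h2 => h.1 ▸ h.2 l (by rwa [min_comm]) (by rwa [max_comm])⟩

theorem LevelRel.trans {w : Fin n → α} {i j k : Fin n} (h : LevelRel w i j)
    (h' : LevelRel w j k) : LevelRel w i k := by
  refine ⟨h.1.trans h'.1, fun l h1 h2 => ?_⟩
  by_cases hl : min i j ≤ l ∧ l ≤ max i j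
  · exact h.2 l hl.1 hl.2
  · rw [h.1]
    refine h'.2 l ?_ ?_
    · simp only [min_le_iff, le_max_iff] at *
      grind
    · simp only [min_le_iff, le_max_iff] at *
      grind

theorem exists_levelPart (w : Fin n → α) : ∃ ρ : NPart n, ∀ i j, ρ.Rel i j ↔ LevelRel w i j :=
  NPart.exists_rel_iff ⟨LevelRel w, fun i => ⟨rfl, fun l h1 h2 => by
    simp only [min_self, max_self] at h1 h2
    rw [le_antisymm h1 h2]⟩, LevelRel.symm, LevelRel.trans⟩

theorem levelRel_iff_of_le {w : Fin n → α} {i j : Fin n} (h : i ≤ j) :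
    LevelRel w i j ↔ w i = w j ∧ ∀ l, i ≤ l → l ≤ j → w i ≤ w l := by
  rw [LevelRel, min_eq_left h, max_eq_right h]

/-- `w` is constant on the blocks of `σ` and strictly larger on everything nested inside a
block. -/
def StrictOn (σ : NPart n) (w : Fin n → α) : Prop :=
  (∀ i j, σ.Rel i j → w i = w j) ∧
    ∀ i l j, i < l → l < j → σ.Rel i j → σ.Rel i l ∨ w i < w l

theorem StrictOn.levelRel {σ : NPart n} {w : Fin n → α} (h : StrictOn σ w) {i j : Fin n}
    (hij : σ.Rel i j) : LevelRel w i j := by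
  wlog hle : i ≤ j generalizing i j
  · exact (this hij.symm (le_of_not_ge hle)).symm
  rw [levelRel_iff_of_le hle]
  refine ⟨h.1 i j hij, fun l h1 h2 => ?_⟩
  rcases h1.eq_or_lt with rfl | h1
  · exact le_rfl
  rcases h2.eq_or_lt with rfl | h2
  · exact (h.1 _ _ hij).le
  rcases h.2 i l j h1 h2 hij with h3 | h3
  · exact (h.1 _ _ h3).le
  · exact h3.le

theorem StrictOn.rel_iff {σ : NPart n} {w : Fin n → α} (h : StrictOn σ w) {x y : Fin n}
    (hxy : x ≤ y) :
    σ.Rel x y ↔ LevelRel w x y ∧ ∀ e ∈ σ.blockMaxes, x ≤ e → e < y → ¬ LevelRel w e x := by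
  constructor
  · intro hr
    refine ⟨h.levelRel hr, fun e he hxe hey hex => ?_⟩
    have : σ.Rel x e := by
      rcases hxe.eq_or_lt with rfl | hxe
      · exact NPart.Rel.refl _ _
      rcases h.2 x e y hxe hey hr with h1 | h1
      · exact h1
      · exact absurd hex.1 h1.ne'
    exact absurd (NPart.mem_blockMaxes.1 he y (this.symm.trans hr)) (not_le.2 hey)
  · rintro ⟨hl, hE⟩
    obtain ⟨e, he, hxe, hle⟩ := NPart.exists_blockMaxes_rel σ x
    have hye : y ≤ e := not_lt.1 fun hey => hE e he hle hey (h.levelRel hxe).symm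
    rcases hye.eq_or_lt with rfl | hye
    · exact hxe
    rcases hxy.eq_or_lt with rfl | hxy
    · exact NPart.Rel.refl _ _
    rcases h.2 x y e hxy hye hxe with h1 | h1
    · exact h1
    · exact absurd hl.1 h1.ne

theorem StrictOn.rel_le_iff {σ τ : NPart n} {w : Fin n → α} (hσ : StrictOn σ w)
    (hτ : StrictOn τ w) :
    (∀ i j, σ.Rel i j → τ.Rel i j) ↔ τ.blockMaxes ⊆ σ.blockMaxes := by
  constructor
  · intro h i hi
    rw [NPart.mem_blockMaxes] at hi ⊢
    exact fun j hj => hi j (h i j hj)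
  · intro h i j hij
    wlog hle : i ≤ j generalizing i j
    · exact (this j i hij.symm (le_of_not_ge hle)).symm
    rw [hσ.rel_iff hle] at hij
    rw [hτ.rel_iff hle]
    exact ⟨hij.1, fun e he => hij.2 e (h he)⟩

theorem strictOn_of_rel_iff_levelRel {ρ : NPart n} {w : Fin n → α}
    (h : ∀ i j, ρ.Rel i j ↔ LevelRel w i j) : StrictOn ρ w := by
  refine ⟨fun i j hij => ((h i j).1 hij).1, fun i l j hil hlj hij => ?_⟩
  rw [h, levelRel_iff_of_le (hil.trans hlj).le] at hij
  rw [h, levelRel_iff_of_le hil.le]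
  rcases (hij.2 l hil.le hlj.le).eq_or_lt with h1 | h1
  · exact Or.inl ⟨h1, fun m hm hm' => hij.2 m hm (hm'.trans hlj.le)⟩
  · exact Or.inr h1

theorem exists_strictOn_blockMaxes_eq {ρ : NPart n} {w : Fin n → α}
    (h : ∀ i j, ρ.Rel i j ↔ LevelRel w i j) {E : Finset (Fin n)} (hE : ρ.blockMaxes ⊆ E) :
    ∃ σ : NPart n, StrictOn σ w ∧ σ.blockMaxes = E := by
  let r : Fin n → Fin n → Prop := fun x y =>
    LevelRel w x y ∧ ∀ e ∈ E, min x y ≤ e → e < max x y → ¬ LevelRel w e x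
  have r_of_le : ∀ {x y}, x ≤ y → (r x y ↔ LevelRel w x y ∧
      ∀ e ∈ E, x ≤ e → e < y → ¬ LevelRel w e x) := by
    intro x y hxy
    simp only [r, min_eq_left hxy, max_eq_right hxy]
  have rrefl : ∀ x, LevelRel w x x := fun x => (h x x).1 (NPart.Rel.refl _ _)
  obtain ⟨σ, hσ⟩ := NPart.exists_rel_iff (n := n) ⟨r, fun x => ⟨rrefl x, fun e _ h1 h2 => by
      simp only [min_self, max_self] at h1 h2
      exact absurd h1 (not_le.2 h2)⟩, fun {x y} hxy => ⟨hxy.1.symm, fun e he h1 h2 h3 =>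
      hxy.2 e he (by rwa [min_comm]) (by rwa [max_comm]) (h3.trans hxy.1.symm)⟩,
    fun {x y z} hxy hyz => ⟨hxy.1.trans hyz.1, fun e he h1 h2 h3 => by
      by_cases hc : min x y ≤ e ∧ e < max x y
      · exact hxy.2 e he hc.1 hc.2 h3
      · refine hyz.2 e he ?_ ?_ (h3.trans hxy.1)
        · simp only [min_le_iff, lt_max_iff] at *
          grind
        · simp only [min_le_iff, lt_max_iff] at *
          grind⟩⟩
  change ∀ i j, σ.Rel i j ↔ r i j at hσ
  refine ⟨σ, ⟨fun i j hij => ((hσ i j).1 hij).1.1, ?_⟩, ?_⟩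
  · intro i l j hil hlj hij
    rw [hσ, r_of_le (hil.trans hlj).le] at hij
    rw [hσ, r_of_le hil.le]
    have h1 := (levelRel_iff_of_le (hil.trans hlj).le).1 hij.1
    rw [levelRel_iff_of_le hil.le]
    rcases (h1.2 l hil.le hlj.le).eq_or_lt with h2 | h2
    · exact Or.inl ⟨⟨h2, fun m hm hm' => h1.2 m hm (hm'.trans hlj.le)⟩,
        fun e he h3 h4 => hij.2 e he h3 (h4.trans hlj)⟩
    · exact Or.inr h2
  · ext x
    rw [NPart.mem_blockMaxes]
    constructor
    · intro hx
      by_contra hxE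
      have hxρ : x ∉ ρ.blockMaxes := fun h' => hxE (hE h')
      rw [NPart.mem_blockMaxes] at hxρ
      push Not at hxρ
      classical
      obtain ⟨y, hy, hxy⟩ := hxρ
      let S := Finset.univ.filter fun z => ρ.Rel x z ∧ x < z
      have hS : S.Nonempty := ⟨y, by simp [S, hy, hxy]⟩
      have hm := S.min'_mem hS
      simp only [S, Finset.mem_filter, Finset.mem_univ, true_and] at hm
      refine absurd (hx _ ((hσ _ _).2 ((r_of_le hm.2.le).2 ⟨(h _ _).1 hm.1, ?_⟩)))
        (not_le.2 hm.2)
      intro e he h1 h2 h3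
      rcases h1.eq_or_lt with rfl | h1
      · exact hxE he
      · have : e ∈ S := by
          simp only [S, Finset.mem_filter, Finset.mem_univ, true_and]
          exact ⟨(h _ _).2 h3.symm, h1⟩
        exact absurd (S.min'_le e this) (not_le.2 h2)
    · intro hx j hj
      by_contra hlt
      rw [not_le] at hlt
      rw [hσ, r_of_le hlt.le] at hj
      exact hj.2 x hx le_rfl hlt (rrefl x)

open Classical in
theorem sum_strictOn_sign {π : NPart n} {w : Fin n → α} (hπ : StrictOn π w) :
    ∑ σ : NPart n with StrictOn σ w ∧ ∀ i j, π.Rel i j → σ.Rel i j,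
      (-1 : ℂ) ^ (π.parts.card - σ.parts.card) =
    if ∀ i j, π.Rel i j ↔ LevelRel w i j then 1 else 0 := by
  obtain ⟨ρ, hρ⟩ := exists_levelPart w
  have hρs := strictOn_of_rel_iff_levelRel hρ
  have hle : ∀ σ : NPart n, StrictOn σ w → ρ.blockMaxes ⊆ σ.blockMaxes := fun σ hσ =>
    (hσ.rel_le_iff hρs).1 fun i j hij => (hρ i j).2 (hσ.levelRel hij)
  have hinj : ∀ σ τ : NPart n, StrictOn σ w → StrictOn τ w → σ.blockMaxes = τ.blockMaxes →
      σ = τ := fun σ τ hσ hτ h => NPart.ext_rel fun i j =>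
    ⟨(hσ.rel_le_iff hτ).2 h.ge i j, (hτ.rel_le_iff hσ).2 h.le i j⟩
  have hcard := Finset.sum_powerset_neg_one_pow_card (x := π.blockMaxes \ ρ.blockMaxes)
  have hcond : (∀ i j, π.Rel i j ↔ LevelRel w i j) ↔ π.blockMaxes \ ρ.blockMaxes = ∅ := by
    rw [Finset.sdiff_eq_empty_iff_subset]
    constructor
    · intro h
      have : π = ρ := NPart.ext_rel fun i j => (h i j).trans (hρ i j).symm
      rw [this]
    · intro h
      rw [hinj π ρ hπ hρs (h.antisymm (hle π hπ))]
      exact hρ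
  have hcast : (∑ m ∈ (π.blockMaxes \ ρ.blockMaxes).powerset, (-1 : ℂ) ^ m.card) =
      if ∀ i j, π.Rel i j ↔ LevelRel w i j then 1 else 0 := by
    rw [if_congr hcond rfl rfl]
    exact_mod_cast congrArg (Int.cast : ℤ → ℂ) hcard
  rw [← hcast]
  refine Finset.sum_nbij (fun σ => π.blockMaxes \ σ.blockMaxes) ?_ ?_ ?_ ?_
  · intro σ hσ
    simp only [Finset.mem_filter, Finset.mem_univ, true_and] at hσ
    exact Finset.mem_powerset.2 (Finset.sdiff_subset_sdiff le_rfl (hle σ hσ.1))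
  · intro σ hσ τ hτ h
    simp only [Finset.coe_filter, Finset.mem_univ, true_and, Set.mem_ofPred_eq] at hσ hτ
    refine hinj σ τ hσ.1 hτ.1 ?_
    rw [← Finset.sdiff_sdiff_eq_self ((hπ.rel_le_iff hσ.1).1 hσ.2),
      ← Finset.sdiff_sdiff_eq_self ((hπ.rel_le_iff hτ.1).1 hτ.2)]
    exact congrArg _ h
  · intro S hS
    have hS := Finset.mem_powerset.1 (Finset.mem_coe.1 hS)
    obtain ⟨σ, hσ, hσE⟩ := exists_strictOn_blockMaxes_eq hρ (E := π.blockMaxes \ S) (by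
      intro i hi
      exact Finset.mem_sdiff.2 ⟨hle π hπ hi, fun h => (Finset.mem_sdiff.1 (hS h)).2 hi⟩)
    refine ⟨σ, ?_, ?_⟩
    · simp only [Finset.coe_filter, Finset.mem_univ, true_and, Set.mem_ofPred_eq]
      exact ⟨hσ, (hπ.rel_le_iff hσ).2 (hσE ▸ Finset.sdiff_subset)⟩
    · simp only [hσE]
      exact Finset.sdiff_sdiff_eq_self (hS.trans Finset.sdiff_subset)
  · intro σ hσ
    simp only [Finset.mem_filter, Finset.mem_univ, true_and] at hσ
    rw [Finset.card_sdiff_of_subset ((hπ.rel_le_iff hσ.1).1 hσ.2), NPart.card_blockMaxes,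
      NPart.card_blockMaxes]

theorem IsNoncrossing.of_strictOn {σ : NPart n} {w : Fin n → α} (h : StrictOn σ w) :
    IsNoncrossing σ := by
  intro a b c d hab hbc hcd V hV W hW ha hc hb hd
  have hac := NPart.rel_of_mem hV ha hc
  have hbd := NPart.rel_of_mem hW hb hd
  suffices σ.Rel a b from σ.eq_of_mem_parts hV hW (NPart.mem_of_rel hV ha this) hb
  rcases h.2 a b c hab hbc hac with h1 | h1
  · exact h1
  rcases h.2 b c d hbc hcd hbd with h2 | h2
  · exact hac.trans h2.symm
  · exact absurd (h1.trans h2) (by rw [h.1 a c hac]; exact lt_irrefl _)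

theorem noncrossing_sqSubseteq_strictOn_iff {π σ : NPart n} {w : Fin n → α} :
    ((IsNoncrossing σ ∧ SqSubseteq π σ) ∧ StrictOn σ w) ↔
      StrictOn π w ∧ StrictOn σ w ∧ ∀ i j, π.Rel i j → σ.Rel i j := by
  constructor
  · rintro ⟨⟨-, h1, h2⟩, hσ⟩
    have hr := NPart.le_iff_rel.1 h1
    refine ⟨⟨fun i j hij => hσ.1 i j (hr i j hij), fun i l j hil hlj hij => ?_⟩, hσ, hr⟩
    refine (hσ.2 i l j hil hlj (hr i j hij)).imp_left fun hl => ?_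
    obtain ⟨V, hV, hi, hj⟩ := hij
    obtain ⟨W, hW, hVW⟩ := h1 V hV
    exact ⟨V, hV, hi, h2 W hW V hV hVW i hi j hj l (NPart.mem_of_rel hW (hVW hi) hl)
      hil.le hlj.le⟩
  · rintro ⟨hπ, hσ, hr⟩
    refine ⟨⟨IsNoncrossing.of_strictOn hσ, NPart.le_iff_rel.2 hr, ?_⟩, hσ⟩
    intro W hW V hV hVW x hx y hy z hz hxz hzy
    rcases hxz.eq_or_lt with rfl | hxz
    · exact hx
    rcases hzy.eq_or_lt with rfl | hzy
    · exact hy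
    rcases hπ.2 x z y hxz hzy (NPart.rel_of_mem hV hx hy) with h1 | h1
    · exact NPart.mem_of_rel hV hx h1
    · exact absurd (hσ.1 x z (NPart.rel_of_mem hW (hVW hx) hz)) h1.ne

theorem omegaNestK_eq {σ : NPart n} (hσ : IsNoncrossing σ) (k : ℕ) :
    omegaNestK σ k = Nat.card {w : Fin n → Fin k // Function.Surjective w ∧ StrictOn σ w} := by
  have hpm : ∀ i, σ.part i ∈ σ.parts := fun i => σ.part_mem.2 (Finset.mem_univ _)
  have hne : ∀ V : {V // V ∈ σ.parts}, V.1.Nonempty := fun V => σ.nonempty_of_mem_parts V.2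
  have hpart : ∀ V : {V // V ∈ σ.parts}, σ.part (hne V).choose = V.1 := fun V =>
    σ.part_eq_of_mem V.2 (hne V).choose_spec
  refine Nat.card_congr
    { toFun := fun f => ⟨fun i => f.1 ⟨σ.part i, hpm i⟩, ?_, ?_, ?_⟩
      invFun := fun w => ⟨fun V => w.1 (hne V).choose, ?_, ?_⟩
      left_inv := ?_
      right_inv := ?_ }
  · intro a
    obtain ⟨V, hV⟩ := f.2.1 a
    refine ⟨(hne V).choose, ?_⟩
    exact (congrArg f.1 (Subtype.ext (hpart V))).trans hV
  · intro i j hij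
    have := NPart.rel_iff_part_eq.1 hij
    simp only [this]
  · intro i l j hil hlj hij
    by_cases hl : σ.Rel i l
    · exact Or.inl hl
    refine Or.inr (f.2.2 _ _ ?_ ?_)
    · intro x hx
      have hlx := NPart.mem_part_iff_rel.1 hx
      constructor
      · refine ⟨i, NPart.mem_part_iff_rel.2 (NPart.Rel.refl _ _), not_lt.1 fun hxi => hl ?_⟩
        rw [NPart.rel_iff_part_eq]
        exact (hσ x i l j hxi hil hlj _ (hpm l) _ (hpm i) hx
          (NPart.mem_part_iff_rel.2 (NPart.Rel.refl _ _))
          (NPart.mem_part_iff_rel.2 (NPart.Rel.refl _ _)) (NPart.mem_part_iff_rel.2 hij)).symm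
      · refine ⟨j, NPart.mem_part_iff_rel.2 hij, not_lt.1 fun hjx => hl ?_⟩
        rw [NPart.rel_iff_part_eq]
        exact (hσ i l j x hil hlj hjx _ (hpm i) _ (hpm l)
          (NPart.mem_part_iff_rel.2 (NPart.Rel.refl _ _)) (NPart.mem_part_iff_rel.2 hij)
          (NPart.mem_part_iff_rel.2 (NPart.Rel.refl _ _)) hx)
    · intro h
      exact hl (NPart.rel_iff_part_eq.2 (congrArg Subtype.val h))
  · intro a
    obtain ⟨i, hi⟩ := w.2.1 a
    refine ⟨⟨σ.part i, hpm i⟩, ?_⟩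
    rw [← hi]
    exact w.2.2.1 _ _ (NPart.rel_iff_part_eq.2 (hpart ⟨σ.part i, hpm i⟩))
  · intro V W hWV hne'
    obtain ⟨⟨a, ha, hax⟩, ⟨b, hb, hxb⟩⟩ := hWV _ (hne W).choose_spec
    have hx := (hne W).choose_spec
    have hnr : ¬ σ.Rel a (hne W).choose := fun h => hne' (Subtype.ext
      (σ.eq_of_mem_parts V.2 W.2 (NPart.mem_of_rel V.2 ha h) hx))
    have hnr' : ¬ σ.Rel b (hne W).choose := fun h => hne' (Subtype.ext
      (σ.eq_of_mem_parts V.2 W.2 (NPart.mem_of_rel V.2 hb h) hx))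
    have h1 : a < (hne W).choose := hax.lt_of_ne fun h => hnr (h ▸ NPart.Rel.refl _ _)
    have h2 : (hne W).choose < b := hxb.lt_of_ne fun h => hnr' (h ▸ NPart.Rel.refl _ _)
    have h3 := (w.2.2.2 _ _ _ h1 h2 (NPart.rel_of_mem V.2 ha hb)).resolve_left hnr
    rwa [w.2.2.1 a _ (NPart.rel_of_mem V.2 ha (hne V).choose_spec)] at h3
  · intro f
    ext V
    simp only [hpart]
  · intro w
    ext i
    simp only
    rw [w.2.2.1 _ i (NPart.rel_iff_part_eq.2 (hpart ⟨σ.part i, hpm i⟩))]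

/-- Surjective words whose level partition is `π`. -/
def levelWords (π : NPart n) (k : ℕ) : Set (Fin n → Fin k) :=
  {w | Function.Surjective w ∧ ∀ i j, π.Rel i j ↔ LevelRel w i j}

open Classical in
theorem sum_sign_mul_omegaNestK (π : NPart n) (k : ℕ) :
    ∑ σ : NPart n with IsNoncrossing σ ∧ SqSubseteq π σ,
      (-1 : ℂ) ^ (π.parts.card - σ.parts.card) * omegaNestK σ k =
    (levelWords π k).ncard := by
  have h1 : ∀ σ : NPart n, IsNoncrossing σ → (omegaNestK σ k : ℂ) =
      ∑ w : Fin n → Fin k with Function.Surjective w, if StrictOn σ w then 1 else 0 := by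
    intro σ hσ
    rw [omegaNestK_eq hσ, Nat.card_eq_fintype_card, Fintype.card_subtype, Finset.sum_boole,
      Finset.filter_filter]
  have h2 : ((levelWords π k).ncard : ℂ) = ∑ w : Fin n → Fin k with Function.Surjective w,
      if ∀ i j, π.Rel i j ↔ LevelRel w i j then 1 else 0 := by
    rw [Finset.sum_boole, Finset.filter_filter, ← Set.ncard_coe_finset]
    simp [levelWords]
  rw [h2, Finset.sum_congr rfl fun σ hσ => by
    rw [h1 σ (Finset.mem_filter.1 hσ).2.1, Finset.mul_sum], Finset.sum_comm]
  refine Finset.sum_congr rfl fun w _ => ?_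
  simp only [mul_ite, mul_one, mul_zero]
  rw [← Finset.sum_filter, Finset.filter_filter]
  simp only [noncrossing_sqSubseteq_strictOn_iff]
  by_cases hπ : StrictOn π w
  · simp only [hπ, true_and]
    exact sum_strictOn_sign hπ
  · simp only [hπ, false_and, Finset.filter_false, Finset.sum_empty]
    rw [if_neg fun h => hπ (strictOn_of_rel_iff_levelRel h)]

theorem NestedIn.trans {U V W : Finset (Fin n)} (h : NestedIn U V) (h' : NestedIn V W) :
    NestedIn U W := by
  intro u hu
  obtain ⟨⟨a, ha, hau⟩, ⟨b, hb, hub⟩⟩ := h u hu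
  obtain ⟨⟨c, hc, hca⟩, -⟩ := h' a ha
  obtain ⟨-, ⟨d, hd, hbd⟩⟩ := h' b hb
  exact ⟨⟨c, hc, hca.trans hau⟩, ⟨d, hd, hub.trans hbd⟩⟩

theorem omegaNest_eq_zero (hn : 1 ≤ n) {σ : NPart n} (hσ : IsNoncrossing σ)
    (hirr : ¬ IsIrreducibleNC σ) : omegaNest σ = 0 := by
  have : NeZero n := ⟨by omega⟩
  have hmem : ∀ i, i ∈ σ.part i := fun i => NPart.mem_part_iff_rel.2 (NPart.Rel.refl _ _)
  have hpm : ∀ i, σ.part i ∈ σ.parts := fun i => σ.part_mem.2 (Finset.mem_univ _)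
  let z : Fin n := 0
  let m : Fin n := ⟨n - 1, by omega⟩
  have hzm : ¬ σ.Rel z m := by
    intro h
    refine hirr ⟨σ.part z, hpm z, fun i hi => ?_, fun i hi => ?_⟩
    · rw [show i = z from Fin.ext hi]
      exact hmem z
    · rw [show i = m from Fin.ext hi]
      exact NPart.mem_part_iff_rel.2 h
  have hm : ¬ NestedIn (σ.part m) (σ.part z) := by
    intro h
    obtain ⟨-, b, hb, hmb⟩ := h m (hmem m)
    have : b = m := le_antisymm (Fin.le_def.2 (by simp only [m]; omega)) hmb
    exact hzm (NPart.mem_part_iff_rel.1 (this ▸ hb))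
  have key := sum_strictSurjCount_eq_zero_of_disconnected
    (fun V W : {V // V ∈ σ.parts} => NestedIn W.1 V.1 ∧ V ≠ W)
    (fun V => NestedIn V.1 (σ.part z))
    ⟨⟨σ.part z, hpm z⟩, fun w hw => ⟨⟨w, hw, le_rfl⟩, ⟨w, hw, le_rfl⟩⟩⟩
    ⟨⟨σ.part m, hpm m⟩, hm⟩ ?_
  · rw [Nat.card_eq_fintype_card, Fintype.card_coe] at key
    simpa only [omegaNest, omegaNestK, strictSurjCount, and_imp] using key
  · rintro V W ⟨hWV, -⟩
    refine ⟨fun hV => hWV.trans hV, fun hW => ?_⟩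
    obtain ⟨x, hx⟩ := σ.nonempty_of_mem_parts W.2
    obtain ⟨⟨a, ha, hax⟩, -⟩ := hWV x hx
    obtain ⟨-, ⟨b, hb, hxb⟩⟩ := hW x hx
    intro y hy
    refine ⟨⟨z, hmem z, Fin.zero_le _⟩, ?_⟩
    by_contra hcon
    push Not at hcon
    have hby := hcon b hb
    have hay : σ.Rel a y := NPart.rel_of_mem V.2 ha hy
    by_cases hzy : σ.Rel z y
    · exact absurd (hcon y (NPart.mem_part_iff_rel.2 hzy)) (lt_irrefl _)
    have hza : z < a := (Fin.zero_le a).lt_of_ne fun h => hzy (by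
      have h' : z = a := h
      rwa [h'])
    have hzb : σ.Rel z b := NPart.mem_part_iff_rel.1 hb
    have hab : a < b := (hax.trans hxb).lt_of_ne fun h => hzy (hzb.trans (h ▸ hay))
    have := hσ z a b y hza hab hby _ (hpm z) _ (hpm a) (hmem z) hb (hmem a)
      (NPart.mem_part_iff_rel.2 hay)
    exact hzy ((NPart.rel_iff_part_eq.2 this).trans hay)

end LevelPartitions

section ListIntercalate

variable {α : Type*}

/-- Starting position, in the intercalated word, of the `j`-th piece of `Ls`. -/
def List.pieceStart (Ls : List (List α)) (j : ℕ) : ℕ := ((Ls.take j).map (·.length + 1)).sum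

theorem List.pieceStart_cons_succ (l : List α) (Ls : List (List α)) (j : ℕ) :
    (l :: Ls).pieceStart (j + 1) = l.length + 1 + Ls.pieceStart j := by
  simp [List.pieceStart]

@[simp] theorem List.pieceStart_zero (Ls : List (List α)) : Ls.pieceStart 0 = 0 := by
  simp [List.pieceStart]

theorem List.length_intercalate_singleton (x : α) (Ls : List (List α)) (h : Ls ≠ []) :
    ([x].intercalate Ls).length + 1 = Ls.pieceStart Ls.length := by
  induction Ls with
  | nil => exact absurd rfl h
  | cons l Ls ih =>
    rw [List.length_cons, List.pieceStart_cons_succ]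
    cases Ls with
    | nil => simp
    | cons l' Ls =>
      rw [List.intercalate_cons_cons, List.length_append, List.length_append, ← ih (by simp)]
      simp
      omega

theorem List.getElem?_intercalate_singleton (x : α) (Ls : List (List α)) (i : ℕ) (y : α) :
    ([x].intercalate Ls)[i]? = some y ↔
      (∃ j l i', Ls[j]? = some l ∧ i = Ls.pieceStart j + i' ∧ l[i']? = some y) ∨
      (y = x ∧ ∃ j, 0 < j ∧ j < Ls.length ∧ i + 1 = Ls.pieceStart j) := by
  induction Ls generalizing i with
  | nil => simp
  | cons l Ls ih =>
    cases Ls with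
    | nil =>
      rw [List.intercalate_singleton]
      constructor
      · intro h
        exact Or.inl ⟨0, l, i, by simp, by simp, h⟩
      · rintro (⟨j, l', i', h1, h2, h3⟩ | ⟨-, j, h1, h2, -⟩)
        · cases j with
          | zero =>
            simp at h1 h2
            subst h1 h2
            exact h3
          | succ j => simp at h1
        · simp at h2
          omega
    | cons l' Ls =>
      rw [List.intercalate_cons_cons, List.append_assoc]
      have hnil : (l' :: Ls).pieceStart 0 = 0 := List.pieceStart_zero _
      constructor
      · intro h
        rcases lt_trichotomy i l.length with hi | hi | hi
        · rw [List.getElem?_append_left hi] at h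
          exact Or.inl ⟨0, l, i, by simp, by simp, h⟩
        · rw [List.getElem?_append_right hi.ge] at h
          simp [hi] at h
          refine Or.inr ⟨h.symm, 1, one_pos, by simp, ?_⟩
          rw [List.pieceStart_cons_succ l (l' :: Ls) 0, hnil]
          omega
        · rw [List.getElem?_append_right hi.le, List.singleton_append,
            show i - l.length = (i - l.length - 1) + 1 by omega, List.getElem?_cons_succ, ih] at h
          rcases h with ⟨j, l₁, i', h1, h2, h3⟩ | ⟨h0, j, h1, h2, h3⟩
          · refine Or.inl ⟨j + 1, l₁, i', by simpa using h1, ?_, h3⟩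
            rw [List.pieceStart_cons_succ]
            omega
          · refine Or.inr ⟨h0, j + 1, by omega, by simpa using h2, ?_⟩
            rw [List.pieceStart_cons_succ]
            omega
      · rintro (⟨j, l₁, i', h1, h2, h3⟩ | ⟨h0, j, h1, h2, h3⟩)
        · cases j with
          | zero =>
            simp at h1 h2
            subst h1 h2
            rw [List.getElem?_append_left (List.getElem?_eq_some_iff.1 h3).1]
            exact h3
          | succ j =>
            rw [List.pieceStart_cons_succ] at h2
            rw [List.getElem?_append_right (by omega), List.singleton_append,
              show i - l.length = (i - l.length - 1) + 1 by omega, List.getElem?_cons_succ, ih]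
            exact Or.inl ⟨j, l₁, i', by simpa using h1, by omega, h3⟩
        · obtain ⟨j, rfl⟩ : ∃ j', j = j' + 1 := ⟨j - 1, by omega⟩
          rw [List.pieceStart_cons_succ] at h3
          cases j with
          | zero =>
            rw [hnil] at h3
            rw [List.getElem?_append_right (by omega), show i = l.length by omega]
            simp [h0]
          | succ j =>
            have := List.pieceStart_cons_succ l' Ls j
            rw [List.getElem?_append_right (by omega), List.singleton_append,
              show i - l.length = (i - l.length - 1) + 1 by omega, List.getElem?_cons_succ, ih]
            exact Or.inr ⟨h0, j + 1, by omega, by simpa using h2, by omega⟩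

theorem List.map_intercalate_singleton {β : Type*} (f : α → β) (x : α) (Ls : List (List α)) :
    ([x].intercalate Ls).map f = [f x].intercalate (Ls.map (List.map f)) := by
  induction Ls with
  | nil => simp
  | cons l Ls ih =>
    cases Ls with
    | nil => simp
    | cons l' Ls =>
      rw [List.intercalate_cons_cons, List.map_append, List.map_append, ih]
      simp only [List.map_cons, List.map_nil, List.intercalate_cons_cons]

theorem List.subset_intercalate_singleton {x : α} {Ls : List (List α)} {l : List α}
    (h : l ∈ Ls) : l ⊆ [x].intercalate Ls := by
  intro y hy
  obtain ⟨j, hj⟩ := List.mem_iff_getElem?.1 h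
  obtain ⟨i, hi⟩ := List.mem_iff_getElem?.1 hy
  exact List.mem_of_getElem? ((List.getElem?_intercalate_singleton _ _ _ _).2
    (Or.inl ⟨j, l, i, hj, rfl, hi⟩))

theorem List.mem_intercalate_singleton_self {x : α} {Ls : List (List α)} (h : 2 ≤ Ls.length) :
    x ∈ [x].intercalate Ls := by
  match Ls, h with
  | l :: l' :: Ls, _ =>
    rw [List.intercalate_cons_cons]
    simp

theorem List.length_lt_length_intercalate_singleton {x : α} {Ls : List (List α)} {l : List α}
    (h : l ∈ Ls) (h2 : 2 ≤ Ls.length) : l.length < ([x].intercalate Ls).length := by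
  have h1 := List.length_intercalate_singleton x Ls (List.ne_nil_of_mem h)
  have h3 : ∀ Ms : List (List α), l ∈ Ms → l.length + Ms.length ≤ Ms.pieceStart Ms.length := by
    intro Ms hl
    induction Ms with
    | nil => simp at hl
    | cons m Ms ih =>
      rw [List.length_cons, List.pieceStart_cons_succ]
      rcases List.mem_cons.1 hl with rfl | hl
      · have : ∀ Ns : List (List α), Ns.length ≤ Ns.pieceStart Ns.length := by
          intro Ns
          induction Ns with
          | nil => simp
          | cons _ _ ih' =>
            rw [List.length_cons, List.pieceStart_cons_succ]
            omega
        have := this Ms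
        omega
      · have := ih hl
        omega
  have := h3 Ls h
  omega

theorem List.notMem_of_mem_splitOn [DecidableEq α] (x : α) (L : List α) :
    ∀ l ∈ L.splitOn x, x ∉ l := by
  induction L with
  | nil => simp
  | cons a L ih =>
    intro l hl
    rw [List.splitOn_cons_eq_if_modifyHead] at hl
    split_ifs at hl with h
    · rcases List.mem_cons.1 hl with rfl | hl
      · simp
      · exact ih l hl
    · cases hs : L.splitOn x with
      | nil => exact absurd hs (List.splitOn_ne_nil _ _)
      | cons l' Ls =>
        rw [hs] at hl ih
        rcases List.mem_cons.1 hl with rfl | hl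
        · have := ih l' List.mem_cons_self
          simp at h
          simp [this, Ne.symm h]
        · exact ih l (List.mem_cons_of_mem _ hl)

end ListIntercalate

namespace PTree

theorem induction_on {P : PTree → Prop} (t : PTree)
    (h : ∀ cs, (∀ c ∈ cs, P c) → P (node cs)) : P t := by
  refine PTree.rec (motive_1 := P) (motive_2 := fun cs => ∀ c ∈ cs, P c) h ?_ ?_ t
  · simp
  · intro c cs hc hcs d hd
    rcases List.mem_cons.1 hd with rfl | hd
    · exact hc
    · exact hcs d hd

theorem isLeafAt_nil (cs : List PTree) : IsLeafAt (node cs) [] ↔ cs = [] := by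
  simp [IsLeafAt, subtreeAt]

theorem isLeafAt_cons (cs : List PTree) (j : ℕ) (p : List ℕ) :
    IsLeafAt (node cs) (j :: p) ↔ ∃ c, cs[j]? = some c ∧ IsLeafAt c p := by
  simp [IsLeafAt, subtreeAt, Option.bind_eq_some_iff]

theorem isInternalAt_nil (cs : List PTree) : IsInternalAt (node cs) [] ↔ cs ≠ [] := by
  simp [IsInternalAt, subtreeAt]

theorem isInternalAt_cons (cs : List PTree) (j : ℕ) (p : List ℕ) :
    IsInternalAt (node cs) (j :: p) ↔ ∃ c, cs[j]? = some c ∧ IsInternalAt c p := by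
  cases h : cs[j]? <;> simp [IsInternalAt, subtreeAt, h]

mutual

/-- The word whose `i`-th letter is the internal vertex owning sector `i`. -/
def owners : PTree → List (List ℕ)
  | node cs => [[]].intercalate (branchOwners cs 0)

/-- The owner words of the members of `cs`, seen as consecutive children numbered from `j`. -/
def branchOwners : List PTree → ℕ → List (List (List ℕ))
  | [], _ => []
  | c :: cs, j => (owners c).map (List.cons j) :: branchOwners cs (j + 1)

end

theorem branchOwners_eq (cs : List PTree) (j : ℕ) :
    branchOwners cs j = cs.mapIdx fun i c => (owners c).map (List.cons (i + j)) := by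
  induction cs generalizing j with
  | nil => simp [branchOwners]
  | cons c cs ih =>
    rw [branchOwners, ih, List.mapIdx_cons]
    simp [add_comm, add_left_comm]

/-- Number of leaves of the first `j` trees of `cs`. -/
def leafOffset (cs : List PTree) (j : ℕ) : ℕ :=
  ((cs.take j).map fun c => (owners c).length + 1).sum

@[simp] theorem leafOffset_zero (cs : List PTree) : leafOffset cs 0 = 0 := by
  simp [leafOffset]

theorem leafOffset_succ {cs : List PTree} {j : ℕ} {c : PTree} (h : cs[j]? = some c) :
    leafOffset cs (j + 1) = leafOffset cs j + ((owners c).length + 1) := by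
  simp [leafOffset, List.take_add_one, h]

theorem leafOffset_mono (cs : List PTree) : Monotone (leafOffset cs) := by
  refine monotone_nat_of_le_succ fun j => ?_
  simp [leafOffset, List.take_add_one]

theorem pieceStart_branchOwners (cs : List PTree) (k j : ℕ) :
    (branchOwners cs k).pieceStart j = leafOffset cs j := by
  rw [List.pieceStart, leafOffset, branchOwners_eq]
  congr 1
  apply List.ext_getElem?
  intro i
  by_cases hi : i < j
  · cases h : cs[i]? <;> simp [hi, h]
  · simp [hi]

theorem length_branchOwners (cs : List PTree) (k : ℕ) :
    (branchOwners cs k).length = cs.length := by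
  simp [branchOwners_eq]

theorem length_owners_node {cs : List PTree} (h : cs ≠ []) :
    (owners (node cs)).length + 1 = leafOffset cs cs.length := by
  rw [owners, List.length_intercalate_singleton, pieceStart_branchOwners, length_branchOwners]
  rw [Ne, ← List.length_eq_zero_iff, length_branchOwners, List.length_eq_zero_iff]
  exact h

theorem owners_leaf : owners (node []) = [] := by
  simp [owners, branchOwners]

theorem getElem?_owners_nil (cs : List PTree) (i : ℕ) :
    (owners (node cs))[i]? = some [] ↔ ∃ j, 0 < j ∧ j < cs.length ∧ i + 1 = leafOffset cs j := by
  rw [owners, List.getElem?_intercalate_singleton]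
  simp only [length_branchOwners, pieceStart_branchOwners, true_and]
  refine ⟨?_, Or.inr⟩
  rintro (⟨j, l, i', h1, -, h3⟩ | h)
  · rw [branchOwners_eq, List.getElem?_mapIdx] at h1
    cases hc : cs[j]? with
    | none => simp [hc] at h1
    | some c =>
      simp [hc] at h1
      subst h1
      simp at h3
  · exact h

theorem getElem?_owners_cons (cs : List PTree) (i j : ℕ) (p : List ℕ) :
    (owners (node cs))[i]? = some (j :: p) ↔
      ∃ c, cs[j]? = some c ∧ leafOffset cs j ≤ i ∧ (owners c)[i - leafOffset cs j]? = some p := by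
  rw [owners, List.getElem?_intercalate_singleton]
  simp only [length_branchOwners, pieceStart_branchOwners]
  constructor
  · rintro (⟨j', l, i', h1, h2, h3⟩ | ⟨h, -⟩)
    · rw [branchOwners_eq, List.getElem?_mapIdx] at h1
      cases hc : cs[j']? with
      | none => simp [hc] at h1
      | some c =>
        simp [hc] at h1
        subst h1
        simp at h3
        obtain ⟨h3, rfl⟩ := h3
        exact ⟨c, hc, by omega, by rw [h2, Nat.add_sub_cancel_left]; exact h3⟩
    · simp at h
  · rintro ⟨c, h1, h2, h3⟩
    refine Or.inl ⟨j, (owners c).map (List.cons j), i - leafOffset cs j, ?_, by omega, ?_⟩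
    · simp [branchOwners_eq, h1]
    · simp [h3]

end PTree

namespace PTree

/-- Leaves of the trees of `cs`, seen as the children of a common root. -/
def forestLeaves (cs : List PTree) : Set (List ℕ) :=
  {p | ∃ j q c, p = j :: q ∧ cs[j]? = some c ∧ IsLeafAt c q}

theorem forestLeaves_append_singleton (cs : List PTree) (c : PTree) :
    forestLeaves (cs ++ [c]) =
      forestLeaves cs ∪ List.cons cs.length '' {q | IsLeafAt c q} := by
  ext p
  constructor
  · rintro ⟨j, q, d, rfl, h, hd⟩
    rw [List.getElem?_append] at h
    split_ifs at h with hj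
    · exact Or.inl ⟨j, q, d, rfl, h, hd⟩
    · rw [List.getElem?_singleton] at h
      split_ifs at h with hj'
      obtain rfl : c = d := by simpa using h
      exact Or.inr ⟨q, hd, by rw [show cs.length = j by omega]⟩
  · rintro (⟨j, q, d, rfl, h, hd⟩ | ⟨q, hq, rfl⟩)
    · refine ⟨j, q, d, rfl, ?_, hd⟩
      rw [List.getElem?_append_left (List.getElem?_eq_some_iff.1 h).1]
      exact h
    · exact ⟨cs.length, q, c, rfl, by simp, hq⟩

theorem disjoint_forestLeaves (cs : List PTree) (s : Set (List ℕ)) {j : ℕ}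
    (hj : cs.length ≤ j) : Disjoint (forestLeaves cs) (List.cons j '' s) := by
  rw [Set.disjoint_left]
  rintro _ ⟨i, q, d, rfl, h, -⟩ ⟨q', -, h'⟩
  have := (List.getElem?_eq_some_iff.1 h).1
  simp at h'
  omega

theorem ncard_image_cons (j : ℕ) (s : Set (List ℕ)) : (List.cons j '' s).ncard = s.ncard :=
  Set.ncard_image_of_injective _ (List.cons_injective)

theorem forestLeaves_finite_and_ncard (cs : List PTree)
    (h : ∀ c ∈ cs, {p | IsLeafAt c p}.Finite ∧ {p | IsLeafAt c p}.ncard = (owners c).length + 1) :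
    (forestLeaves cs).Finite ∧
      (forestLeaves cs).ncard = (cs.map fun c => (owners c).length + 1).sum := by
  induction cs using List.reverseRecOn with
  | nil => simp [forestLeaves]
  | append_singleton cs c ih =>
    obtain ⟨h1, h2⟩ := ih fun d hd => h d (by simp [hd])
    obtain ⟨h3, h4⟩ := h c (by simp)
    rw [forestLeaves_append_singleton]
    refine ⟨h1.union (h3.image _), ?_⟩
    rw [Set.ncard_union_eq (disjoint_forestLeaves cs _ le_rfl) h1 (h3.image _),
      ncard_image_cons, h2, h4]
    simp

theorem leaves_finite_and_ncard (t : PTree) :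
    {p | IsLeafAt t p}.Finite ∧ {p | IsLeafAt t p}.ncard = (owners t).length + 1 := by
  induction t using induction_on with
  | h cs ih =>
    by_cases hcs : cs = []
    · subst hcs
      have : {p | IsLeafAt (node []) p} = {[]} := by
        ext p
        cases p <;> simp [isLeafAt_nil, isLeafAt_cons]
      rw [this]
      simp [owners_leaf]
    · have : {p | IsLeafAt (node cs) p} = forestLeaves cs := by
        ext p
        cases p with
        | nil => simp [isLeafAt_nil, forestLeaves, hcs]
        | cons j p => simp [isLeafAt_cons, forestLeaves]
      rw [this, length_owners_node hcs, leafOffset, List.take_length]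
      exact forestLeaves_finite_and_ncard cs ih

theorem numLeaves_eq (t : PTree) : numLeaves t = (owners t).length + 1 :=
  (leaves_finite_and_ncard t).2

theorem leavesBefore_nil (t : PTree) : leavesBefore t [] = 0 := by
  simp [leavesBefore]

theorem leavesBefore_cons {cs : List PTree} {j : ℕ} {c : PTree} (h : cs[j]? = some c)
    (p : List ℕ) : leavesBefore (node cs) (j :: p) = leafOffset cs j + leavesBefore c p := by
  have hj := (List.getElem?_eq_some_iff.1 h).1
  have key : {q | IsLeafAt (node cs) q ∧ List.Lex (· < ·) q (j :: p) ∧ ¬ (j :: p) <+: q} =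
      forestLeaves (cs.take j) ∪
        List.cons j '' {q | IsLeafAt c q ∧ List.Lex (· < ·) q p ∧ ¬ p <+: q} := by
    ext q
    cases q with
    | nil =>
      have : cs ≠ [] := by
        rintro rfl
        simp at h
      simp [isLeafAt_nil, forestLeaves, this]
    | cons k q =>
      simp only [Set.mem_ofPred_eq, Set.mem_union, Set.mem_image, isLeafAt_cons,
        List.cons_lex_cons_iff, List.cons_prefix_cons, forestLeaves, List.cons.injEq]
      constructor
      · rintro ⟨⟨d, hd, hq⟩, hk | ⟨rfl, hk⟩, h3⟩
        · exact Or.inl ⟨k, q, d, ⟨rfl, rfl⟩, by rw [List.getElem?_take_of_lt hk]; exact hd, hq⟩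
        · obtain rfl : c = d := by simpa [h] using hd
          exact Or.inr ⟨q, ⟨hq, hk, fun h4 => h3 ⟨rfl, h4⟩⟩, rfl, rfl⟩
      · rintro (⟨k', q', d, ⟨rfl, rfl⟩, hd, hq⟩ | ⟨q', ⟨h1, h2, h3⟩, rfl, rfl⟩)
        · have hk : k < j := by
            have := (List.getElem?_eq_some_iff.1 hd).1
            simp at this
            omega
          rw [List.getElem?_take_of_lt hk] at hd
          exact ⟨⟨d, hd, hq⟩, Or.inl hk, fun h4 => by omega⟩
        · exact ⟨⟨c, h, h1⟩, Or.inr ⟨rfl, h2⟩, fun h4 => h3 h4.2⟩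
  have h1 := forestLeaves_finite_and_ncard (cs.take j) fun c _ => leaves_finite_and_ncard c
  have h2 : {q | IsLeafAt c q ∧ List.Lex (· < ·) q p ∧ ¬ p <+: q}.Finite :=
    (leaves_finite_and_ncard c).1.subset fun q hq => hq.1
  change Set.ncard {q | IsLeafAt (node cs) q ∧ List.Lex (· < ·) q (j :: p) ∧ ¬ (j :: p) <+: q} = _
  rw [key, Set.ncard_union_eq (disjoint_forestLeaves _ _ (by simp)) h1.1 (h2.image _),
    ncard_image_cons, h1.2]
  rfl

theorem sectorIn_nil (t : PTree) (i : ℕ) : SectorIn t [] i ↔ i < (owners t).length := by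
  simp only [SectorIn, leavesBefore_nil, subtree!, subtreeAt, Option.getD_some, numLeaves_eq]
  omega

theorem sectorIn_cons {cs : List PTree} {j : ℕ} {c : PTree} (h : cs[j]? = some c)
    (p : List ℕ) (i : ℕ) :
    SectorIn (node cs) (j :: p) i ↔ leafOffset cs j ≤ i ∧ SectorIn c p (i - leafOffset cs j) := by
  simp only [SectorIn, leavesBefore_cons h, subtree!, subtreeAt, h, Option.bind_some]
  omega

theorem leafOffset_add_le {cs : List PTree} {j : ℕ} {c : PTree} (h : cs[j]? = some c) :
    leafOffset cs j + (owners c).length ≤ (owners (node cs)).length := by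
  have hj := (List.getElem?_eq_some_iff.1 h).1
  have h1 := length_owners_node (List.ne_nil_of_length_pos (by omega : 0 < cs.length))
  have h2 := leafOffset_succ h
  have h3 := leafOffset_mono cs (show j + 1 ≤ cs.length from hj)
  omega

theorem SectorIn.lt {t : PTree} {p : List ℕ} {i : ℕ} (hp : IsInternalAt t p)
    (h : SectorIn t p i) : i < (owners t).length := by
  induction p generalizing t i with
  | nil => exact (sectorIn_nil t i).1 h
  | cons j p ih =>
    obtain ⟨cs⟩ := t
    obtain ⟨c, hc, hp⟩ := (isInternalAt_cons _ _ _).1 hp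
    obtain ⟨h1, h2⟩ := (sectorIn_cons hc p i).1 h
    have := ih hp h2
    have := leafOffset_add_le hc
    omega

theorem ownsSector_iff (t : PTree) (v : List ℕ) (i : ℕ) :
    OwnsSector t v i ↔ (owners t)[i]? = some v := by
  induction t using induction_on generalizing v i with
  | h cs ih =>
    cases v with
    | cons j p =>
      rw [getElem?_owners_cons]
      constructor
      · rintro ⟨h1, h2, h3⟩
        obtain ⟨c, hc, h1⟩ := (isInternalAt_cons _ _ _).1 h1
        rw [sectorIn_cons hc] at h2
        refine ⟨c, hc, h2.1, (ih c (List.mem_of_getElem? hc) _ _).1 ⟨h1, h2.2, ?_⟩⟩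
        intro w hw hvw hne hs
        exact h3 (j :: w) ((isInternalAt_cons _ _ _).2 ⟨c, hc, hw⟩) (by simpa using hvw)
          (by simpa using hne) ((sectorIn_cons hc _ _).2 ⟨h2.1, hs⟩)
      · rintro ⟨c, hc, h1, h2⟩
        obtain ⟨h3, h4, h5⟩ := (ih c (List.mem_of_getElem? hc) _ _).2 h2
        refine ⟨(isInternalAt_cons _ _ _).2 ⟨c, hc, h3⟩, (sectorIn_cons hc _ _).2 ⟨h1, h4⟩, ?_⟩
        rintro (_ | ⟨j', w⟩) hw hvw hne hs
        · simp at hvw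
        · obtain ⟨rfl, hvw⟩ := List.cons_prefix_cons.1 hvw
          obtain ⟨c', hc', hw⟩ := (isInternalAt_cons _ _ _).1 hw
          obtain rfl : c = c' := by simpa [hc] using hc'
          exact h5 w hw (by simpa using hvw) (by simpa using hne) ((sectorIn_cons hc _ _).1 hs).2
    | nil =>
      rw [getElem?_owners_nil]
      constructor
      · rintro ⟨h1, h2, h3⟩
        rw [isInternalAt_nil] at h1
        rw [sectorIn_nil] at h2
        have h4 := length_owners_node h1
        by_contra hno
        push Not at hno
        have hle : ∀ j, j < cs.length → leafOffset cs j ≤ i := by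
          intro j
          induction j with
          | zero => simp
          | succ j ihj =>
            intro hj
            have hj' : j < cs.length := by omega
            have hc : cs[j]? = some cs[j] := List.getElem?_eq_getElem hj'
            by_contra hlt
            have h5 := hno (j + 1) (by omega) hj
            have h6 := leafOffset_succ hc
            have h7 := ihj hj'
            refine h3 [j] ((isInternalAt_cons _ _ _).2 ⟨cs[j], hc, ?_⟩) (by simp) (by simp)
              ((sectorIn_cons hc _ _).2 ⟨h7, (sectorIn_nil _ _).2 (by omega)⟩)
            cases hn : cs[j] with
            | node ds =>
              rw [isInternalAt_nil]
              rintro rfl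
              rw [hn, owners_leaf] at h6
              simp at h6
              omega
        have hpos : 0 < cs.length := List.length_pos_of_ne_nil h1
        have hc : cs[cs.length - 1]? = some cs[cs.length - 1] :=
          List.getElem?_eq_getElem (by omega)
        have h5 := hle (cs.length - 1) (by omega)
        have h6 := leafOffset_succ hc
        rw [Nat.sub_add_cancel hpos] at h6
        refine h3 [cs.length - 1] ((isInternalAt_cons _ _ _).2 ⟨_, hc, ?_⟩) (by simp) (by simp)
          ((sectorIn_cons hc _ _).2 ⟨h5, (sectorIn_nil _ _).2 (by omega)⟩)
        cases hn : cs[cs.length - 1] with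
        | node ds =>
          rw [isInternalAt_nil]
          rintro rfl
          rw [hn, owners_leaf] at h6
          simp at h6
          omega
      · rintro ⟨j, hj0, hj, hij⟩
        have hcs : cs ≠ [] := List.ne_nil_of_length_pos (by omega)
        refine ⟨(isInternalAt_nil _).2 hcs, (sectorIn_nil _ _).2 ?_, ?_⟩
        · have hc : cs[j]? = some cs[j] := List.getElem?_eq_getElem hj
          have h1 := leafOffset_succ hc
          have h2 := leafOffset_mono cs (show j + 1 ≤ cs.length from hj)
          have h3 := length_owners_node hcs
          omega
        · rintro (_ | ⟨j', w⟩) hw hvw hne hs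
          · exact hne rfl
          · obtain ⟨c, hc, hw⟩ := (isInternalAt_cons _ _ _).1 hw
            obtain ⟨h1, h2⟩ := (sectorIn_cons hc _ _).1 hs
            have h3 := h2.lt hw
            have h4 := leafOffset_succ hc
            rcases Nat.lt_or_ge j' j with h | h
            · have := leafOffset_mono cs (show j' + 1 ≤ j from h)
              omega
            · have := leafOffset_mono cs h
              omega

end PTree

namespace PTree

theorem isInternalAt_of_mem_owners {t : PTree} {v : List ℕ} (h : v ∈ owners t) :
    IsInternalAt t v := by
  obtain ⟨i, hi⟩ := List.mem_iff_getElem?.1 h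
  exact ((ownsSector_iff t v i).2 hi).1

theorem mem_owners_node_cons {cs : List PTree} {j : ℕ} {c : PTree} (h : cs[j]? = some c)
    {p : List ℕ} (hp : p ∈ owners c) : j :: p ∈ owners (node cs) := by
  obtain ⟨i, hi⟩ := List.mem_iff_getElem?.1 hp
  exact List.mem_of_getElem? ((getElem?_owners_cons cs (leafOffset cs j + i) j p).2
    ⟨c, h, by omega, by rw [Nat.add_sub_cancel_left]; exact hi⟩)

theorem nil_mem_owners {cs : List PTree} (h : 2 ≤ cs.length) : [] ∈ owners (node cs) := by
  rw [owners]
  exact List.mem_intercalate_singleton_self (by rwa [length_branchOwners])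

theorem IsSchroder.two_le_length {cs : List PTree} (h : IsSchroder (PTree.node cs)) (hcs : cs ≠ []) :
    2 ≤ cs.length := by
  cases h with
  | leaf => exact absurd rfl hcs
  | node _ h2 _ => exact h2

theorem IsSchroder.of_mem {cs : List PTree} (h : IsSchroder (PTree.node cs)) {c : PTree}
    (hc : c ∈ cs) : IsSchroder c := by
  cases h with
  | leaf => simp at hc
  | node _ _ h3 => exact h3 c hc

theorem IsSchroder.mem_owners_iff {t : PTree} (ht : IsSchroder t) (v : List ℕ) :
    v ∈ owners t ↔ IsInternalAt t v := by
  refine ⟨isInternalAt_of_mem_owners, fun h => ?_⟩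
  induction v generalizing t with
  | nil =>
    obtain ⟨cs⟩ := t
    exact nil_mem_owners (ht.two_le_length ((isInternalAt_nil cs).1 h))
  | cons j p ih =>
    obtain ⟨cs⟩ := t
    obtain ⟨c, hc, h⟩ := (isInternalAt_cons _ _ _).1 h
    exact mem_owners_node_cons hc (ih (ht.of_mem (List.mem_of_getElem? hc)) h)

/-- `F` is strictly increasing along the ancestor order of the internal vertices of `t`. -/
def StrictLab (t : PTree) (F : List ℕ → ℕ) : Prop :=
  ∀ v w, IsInternalAt t v → IsInternalAt t w → v <+: w → v ≠ w → F v < F w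

theorem strictLab_length (t : PTree) : StrictLab t List.length := by
  intro v w _ _ hvw hne
  exact lt_of_le_of_ne hvw.length_le fun h => hne (hvw.eq_of_length h)

theorem StrictLab.child {cs : List PTree} {F : List ℕ → ℕ} (hF : StrictLab (node cs) F) {j : ℕ}
    {c : PTree} (h : cs[j]? = some c) : StrictLab c fun p => F (j :: p) := by
  intro v w hv hw hvw hne
  exact hF _ _ ((isInternalAt_cons _ _ _).2 ⟨c, h, hv⟩) ((isInternalAt_cons _ _ _).2 ⟨c, h, hw⟩)
    (by simpa using hvw) (by simpa using hne)

theorem StrictLab.root_lt {cs : List PTree} {F : List ℕ → ℕ} (hF : StrictLab (node cs) F) {j : ℕ}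
    {p : List ℕ} (h : IsInternalAt (node cs) (j :: p)) : F [] < F (j :: p) := by
  refine hF _ _ ((isInternalAt_nil _).2 ?_) h (by simp) (by simp)
  rintro rfl
  simp [isInternalAt_cons] at h

theorem StrictLab.root_le {t : PTree} {F : List ℕ → ℕ} (hF : StrictLab t F)
    {p : List ℕ} (h : p ∈ owners t) : F [] ≤ F p := by
  obtain ⟨cs⟩ := t
  cases p with
  | nil => exact le_rfl
  | cons j p => exact (hF.root_lt (isInternalAt_of_mem_owners h)).le

theorem lt_leafOffset_succ {cs : List PTree} {i j : ℕ} {c : PTree} {p : List ℕ}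
    (hc : cs[j]? = some c) (h1 : leafOffset cs j ≤ i)
    (h2 : (owners c)[i - leafOffset cs j]? = some p) : i + 1 < leafOffset cs (j + 1) := by
  have h3 := leafOffset_succ hc
  have h4 := (List.getElem?_eq_some_iff.1 h2).1
  omega

/-- In a strictly labelled tree, two sectors have the same owner iff the labels of their owners
agree and are minimal among the labels of the owners of the sectors in between. -/
theorem StrictLab.owner_eq_iff {t : PTree} {F : List ℕ → ℕ} (hF : StrictLab t F) {i j : ℕ}
    {u v : List ℕ} (hij : i ≤ j) (hu : (owners t)[i]? = some u) (hv : (owners t)[j]? = some v) :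
    u = v ↔ F u = F v ∧
      ∀ l x, i ≤ l → l ≤ j → (owners t)[l]? = some x → F u ≤ F x := by
  induction t using induction_on generalizing F i j u v with
  | h cs ih =>
    have hle : ∀ l x, (owners (node cs))[l]? = some x → F [] ≤ F x := fun l x h =>
      hF.root_le (List.mem_of_getElem? h)
    rcases u with _ | ⟨a, p⟩
    · constructor
      · rintro rfl
        exact ⟨rfl, fun l x _ _ h => hle l x h⟩
      · rintro ⟨h, -⟩
        rcases v with _ | ⟨b, q⟩
        · rfl
        · exact absurd h (hF.root_lt (isInternalAt_of_mem_owners (List.mem_of_getElem? hv))).ne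
    · have hroot := hF.root_lt (isInternalAt_of_mem_owners (List.mem_of_getElem? hu))
      rcases v with _ | ⟨b, q⟩
      · constructor
        · intro h
          simp at h
        · rintro ⟨h, -⟩
          exact absurd h hroot.ne'
      · obtain ⟨c, hc, hi, hu⟩ := (getElem?_owners_cons _ _ _ _).1 hu
        obtain ⟨d, hd, hj, hv⟩ := (getElem?_owners_cons _ _ _ _).1 hv
        have hi' := lt_leafOffset_succ hc hi hu
        have hj' := lt_leafOffset_succ hd hj hv
        rcases lt_trichotomy a b with hab | rfl | hab
        · have hb := (List.getElem?_eq_some_iff.1 hd).1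
          have h1 := leafOffset_mono cs (show a + 1 ≤ b from hab)
          have h2 : (owners (node cs))[leafOffset cs b - 1]? = some [] :=
            (getElem?_owners_nil _ _).2 ⟨b, by omega, hb, by omega⟩
          constructor
          · intro h
            simp at h
            omega
          · rintro ⟨-, h⟩
            exact absurd (h _ _ (by omega) (by omega) h2) (not_le.2 hroot)
        · obtain rfl : c = d := by simpa [hc] using hd
          have := ih c (List.mem_of_getElem? hc) (hF.child hc)
            (Nat.sub_le_sub_right hij (leafOffset cs a)) hu hv
          rw [List.cons.injEq, and_iff_right rfl, this]
          refine and_congr_right fun _ => ⟨fun h l x h1 h2 h3 => ?_, fun h l x h1 h2 h3 => ?_⟩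
          · rcases x with _ | ⟨e, x⟩
            · obtain ⟨k, -, -, hk⟩ := (getElem?_owners_nil _ _).1 h3
              rcases Nat.lt_or_ge a k with h | h
              · have := leafOffset_mono cs (show a + 1 ≤ k from h)
                omega
              · have := leafOffset_mono cs h
                omega
            · obtain ⟨c', hc', hl, hx⟩ := (getElem?_owners_cons _ _ _ _).1 h3
              have hl' := lt_leafOffset_succ hc' hl hx
              rcases lt_trichotomy a e with h' | rfl | h'
              · have := leafOffset_mono cs (show a + 1 ≤ e from h')
                omega
              · obtain rfl : c = c' := by simpa [hc] using hc'
                exact h _ _ (by omega) (by omega) hx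
              · have := leafOffset_mono cs (show e + 1 ≤ a from h')
                omega
          · refine h (l + leafOffset cs a) (a :: x) (by omega) (by omega) ?_
            exact (getElem?_owners_cons _ _ _ _).2
              ⟨c, hc, by omega, by rw [Nat.add_sub_cancel]; exact h3⟩
        · have := leafOffset_mono cs (show b + 1 ≤ a from hab)
          omega

/-- The words of labels of the children of the root. -/
def branchWords (cs : List PTree) (F : List ℕ → ℕ) : List (List ℕ) :=
  cs.mapIdx fun j c => (owners c).map fun p => F (j :: p)

theorem map_owners_node (cs : List PTree) (F : List ℕ → ℕ) :
    (owners (node cs)).map F = [F []].intercalate (branchWords cs F) := by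
  rw [owners, List.map_intercalate_singleton, branchOwners_eq, branchWords]
  congr 1
  apply List.ext_getElem?
  intro j
  cases h : cs[j]? <;> simp [h]

theorem StrictLab.notMem_branchWords {cs : List PTree} {F : List ℕ → ℕ}
    (hF : StrictLab (node cs) F) : ∀ l ∈ branchWords cs F, F [] ∉ l := by
  intro l hl hm
  obtain ⟨j, hj⟩ := List.mem_iff_getElem?.1 hl
  rw [branchWords, List.getElem?_mapIdx] at hj
  obtain ⟨c, hc, rfl⟩ := Option.map_eq_some_iff.1 hj
  obtain ⟨p, hp, hp'⟩ := List.mem_map.1 hm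
  exact (hF.root_lt ((isInternalAt_cons _ _ _).2
    ⟨c, hc, isInternalAt_of_mem_owners hp⟩)).ne' hp'

theorem StrictLab.splitOn_map_owners {cs : List PTree} {F : List ℕ → ℕ} (hcs : cs ≠ [])
    (hF : StrictLab (node cs) F) :
    ((owners (node cs)).map F).splitOn (F []) = branchWords cs F := by
  rw [map_owners_node, List.splitOn_intercalate _ hF.notMem_branchWords]
  simpa [branchWords] using hcs

theorem eq_of_map_owners_eq {t t' : PTree} (ht : IsSchroder t) (ht' : IsSchroder t')
    {F F' : List ℕ → ℕ} (hF : StrictLab t F) (hF' : StrictLab t' F')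
    (h : (owners t).map F = (owners t').map F') : t = t' := by
  induction t using induction_on generalizing t' F F' with
  | h cs ih =>
    obtain ⟨cs'⟩ := t'
    by_cases hcs : cs = []
    · subst hcs
      by_cases hcs' : cs' = []
      · rw [hcs']
      · have := nil_mem_owners (ht'.two_le_length hcs')
        rw [owners_leaf, List.map_nil, eq_comm, List.map_eq_nil_iff] at h
        simp [h] at this
    · have hm := nil_mem_owners (ht.two_le_length hcs)
      have hcs' : cs' ≠ [] := by
        rintro rfl
        rw [owners_leaf, List.map_nil, List.map_eq_nil_iff] at h
        simp [h] at hm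
      have hm' := nil_mem_owners (ht'.two_le_length hcs')
      have hroot : F [] = F' [] := by
        apply le_antisymm
        · obtain ⟨p, hp, hp'⟩ := List.mem_map.1 (h ▸ List.mem_map_of_mem (f := F') hm')
          exact hp' ▸ hF.root_le hp
        · obtain ⟨p, hp, hp'⟩ := List.mem_map.1 (h ▸ List.mem_map_of_mem (f := F) hm)
          exact hp' ▸ hF'.root_le hp
      have hb : branchWords cs F = branchWords cs' F' := by
        rw [← hF.splitOn_map_owners hcs, ← hF'.splitOn_map_owners hcs', h, hroot]
      congr 1
      have hlen : cs.length = cs'.length := by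
        simpa [branchWords] using congrArg List.length hb
      refine List.ext_getElem hlen fun j hj hj' => ?_
      have hc : cs[j]? = some cs[j] := List.getElem?_eq_getElem hj
      have hc' : cs'[j]? = some cs'[j] := List.getElem?_eq_getElem hj'
      refine ih cs[j] (List.getElem_mem hj) (ht.of_mem (List.getElem_mem hj))
        (ht'.of_mem (List.getElem_mem hj')) (hF.child hc) (hF'.child hc') ?_
      have := congrArg (fun L => L[j]?) hb
      simpa [branchWords, hc, hc'] using this

theorem exists_map_owners_eq (L : List ℕ) :
    ∃ t F, IsSchroder t ∧ StrictLab t F ∧ (owners t).map F = L := by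
  induction hN : L.length using Nat.strong_induction_on generalizing L with
  | _ N ih =>
    subst hN
    by_cases hL : L = []
    · subst hL
      exact ⟨leaf, List.length, .leaf, strictLab_length _, by simp [owners_leaf]⟩
    obtain ⟨m, hm, hmin⟩ : ∃ m ∈ L, ∀ x ∈ L, m ≤ x := by
      have hne : L.toFinset.Nonempty := by simpa using hL
      exact ⟨L.toFinset.min' hne, by simpa using L.toFinset.min'_mem hne,
        fun x hx => L.toFinset.min'_le x (by simpa using hx)⟩
    have hint : [m].intercalate (L.splitOn m) = L := List.intercalate_splitOn m
    have hnot := List.notMem_of_mem_splitOn m L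
    have hlen : 2 ≤ (L.splitOn m).length := by
      match hs : L.splitOn m with
      | [] => exact absurd hs (List.splitOn_ne_nil _ _)
      | [l] =>
        rw [hs, List.intercalate_singleton] at hint
        exact absurd (hint ▸ hm) (hnot l (by simp [hs]))
      | _ :: _ :: _ => simp
    have hex : ∀ l, ∃ s F, l ∈ L.splitOn m →
        IsSchroder s ∧ StrictLab s F ∧ (owners s).map F = l := by
      intro l
      by_cases hl : l ∈ L.splitOn m
      · obtain ⟨s, F, h⟩ := ih l.length
          (by simpa only [hint] using List.length_lt_length_intercalate_singleton (x := m) hl hlen)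
          l rfl
        exact ⟨s, F, fun _ => h⟩
      · exact ⟨leaf, List.length, fun h => absurd h hl⟩
    choose s F hsF using hex
    let G : List ℕ → ℕ
      | [] => m
      | j :: p => F ((L.splitOn m).getD j []) p
    have hG : ∀ j l p, (L.splitOn m)[j]? = some l → G (j :: p) = F l p := by
      intro j l p h
      simp [G, List.getD_eq_getElem?_getD, h]
    refine ⟨node ((L.splitOn m).map s), G, ?_, ?_, ?_⟩
    · refine .node _ (by simpa using hlen) fun c hc => ?_
      obtain ⟨l, hl, rfl⟩ := List.mem_map.1 hc
      exact (hsF l hl).1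
    · rintro (_ | ⟨j, p⟩) w hv hw hvw hne
      · rcases w with _ | ⟨j, q⟩
        · exact absurd rfl hne
        obtain ⟨c, hc, hq⟩ := (isInternalAt_cons _ _ _).1 hw
        rw [List.getElem?_map] at hc
        obtain ⟨l, hl, rfl⟩ := Option.map_eq_some_iff.1 hc
        have hlm := List.mem_of_getElem? hl
        obtain ⟨h1, h2, h3⟩ := hsF l hlm
        rw [hG j l q hl]
        have hmem : F l q ∈ l := by
          have := List.mem_map_of_mem (f := F l) ((h1.mem_owners_iff q).2 hq)
          rwa [h3] at this
        refine lt_of_le_of_ne (hmin _ (hint ▸ List.subset_intercalate_singleton hlm hmem)) ?_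
        intro h
        exact hnot l hlm (by rw [show m = F l q from h]; exact hmem)
      · rcases w with _ | ⟨j', q⟩
        · simp at hvw
        obtain ⟨rfl, hpq⟩ := List.cons_prefix_cons.1 hvw
        obtain ⟨c, hc, hp⟩ := (isInternalAt_cons _ _ _).1 hv
        obtain ⟨c', hc', hq⟩ := (isInternalAt_cons _ _ _).1 hw
        obtain rfl : c = c' := by simpa [hc] using hc'
        rw [List.getElem?_map] at hc
        obtain ⟨l, hl, rfl⟩ := Option.map_eq_some_iff.1 hc
        rw [hG j l p hl, hG j l q hl]
        exact (hsF l (List.mem_of_getElem? hl)).2.1 p q hp hq (by simpa using hvw)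
          (by simpa using hne)
    · rw [map_owners_node]
      conv_rhs => rw [← hint]
      congr 1
      apply List.ext_getElem?
      intro j
      rw [branchWords, List.getElem?_mapIdx, List.getElem?_map]
      cases hl : (L.splitOn m)[j]? with
      | none => simp
      | some l => simpa [hG j l _ hl] using (hsF l (List.mem_of_getElem? hl)).2.2

theorem length_lt_of_mem_owners {t : PTree} (ht : IsSchroder t) {v : List ℕ} (hv : v ∈ owners t) :
    v.length < (owners t).length := by
  induction t using induction_on generalizing v with
  | h cs ih =>
    rcases v with _ | ⟨j, p⟩
    · exact List.length_pos_of_mem hv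
    · obtain ⟨i, hi⟩ := List.mem_iff_getElem?.1 hv
      obtain ⟨c, hc, -, h2⟩ := (getElem?_owners_cons _ _ _ _).1 hi
      have h3 := ih c (List.mem_of_getElem? hc) (ht.of_mem (List.mem_of_getElem? hc))
        (List.mem_of_getElem? h2)
      have h4 : (owners c).map (List.cons j) ∈ branchOwners cs 0 := by
        rw [List.mem_iff_getElem?]
        exact ⟨j, by simp [branchOwners_eq, hc]⟩
      have h5 := ht.two_le_length (by rintro rfl; simp at hc)
      have h6 := List.length_lt_length_intercalate_singleton (x := ([] : List ℕ)) h4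
        (by rwa [length_branchOwners])
      rw [← owners, List.length_map] at h6
      simp only [List.length_cons]
      omega

theorem mem_ST_iff (t : PTree) (n : ℕ) : t ∈ ST n ↔ IsSchroder t ∧ (owners t).length = n := by
  change IsSchroder t ∧ numLeaves t = n + 1 ↔ _
  rw [numLeaves_eq, Nat.add_right_cancel_iff]

theorem finite_ST (n : ℕ) : (ST n).Finite := by
  refine Set.Finite.of_finite_image (f := fun t => (owners t).map List.length) ?_ ?_
  · refine (Set.finite_range fun w : Fin n → Fin n => List.ofFn fun i => (w i : ℕ)).subset ?_
    rintro _ ⟨t, ht, rfl⟩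
    obtain ⟨hs, rfl⟩ := (mem_ST_iff t n).1 ht
    refine ⟨fun i => ⟨(owners t)[i].length, length_lt_of_mem_owners hs (List.getElem_mem _)⟩, ?_⟩
    apply List.ext_getElem <;> simp
  · intro t ht t' ht' h
    exact eq_of_map_owners_eq ht.1 ht'.1 (strictLab_length t) (strictLab_length t') h

end PTree

namespace PTree

variable {n : ℕ}

/-- The owner of a sector, as an internal vertex. -/
def ownerAt {t : PTree} (ht : t ∈ ST n) (i : Fin n) : {p // IsInternalAt t p} :=
  ⟨(owners t)[i.val]'(by rw [((mem_ST_iff t n).1 ht).2]; exact i.2),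
    isInternalAt_of_mem_owners (List.getElem_mem _)⟩

theorem getElem?_owners {t : PTree} (ht : t ∈ ST n) (i : Fin n) :
    (owners t)[i.val]? = some (ownerAt ht i).1 :=
  List.getElem?_eq_getElem _

theorem ownerAt_surjective {t : PTree} (ht : t ∈ ST n) : Function.Surjective (ownerAt ht) := by
  intro v
  obtain ⟨h1, h2⟩ := (mem_ST_iff t n).1 ht
  obtain ⟨i, hi, h⟩ := List.getElem_of_mem ((h1.mem_owners_iff v.1).2 v.2)
  exact ⟨⟨i, h2 ▸ hi⟩, Subtype.ext h⟩

theorem finite_internal {t : PTree} (ht : t ∈ ST n) : Finite {p // IsInternalAt t p} :=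
  Finite.of_surjective _ (ownerAt_surjective ht)

theorem numInternal_le {t : PTree} (ht : t ∈ ST n) : numInternal t ≤ n := by
  simpa [numInternal] using Nat.card_le_card_of_surjective _ (ownerAt_surjective ht)

theorem omegaSkK_eq_zero {t : PTree} (ht : t ∈ ST n) {k : ℕ} (hk : numInternal t < k) :
    omegaSkK t k = 0 :=
  have := finite_internal ht
  card_surjective_subtype_eq_zero hk _

/-- `w` is the word of sector labels of some strict labelling of `t`. -/
def Compat {k : ℕ} (t : PTree) (w : Fin n → Fin k) : Prop :=
  ∃ F, StrictLab t F ∧ (owners t).map F = List.ofFn fun i => (w i : ℕ)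

theorem compat_iff {k : ℕ} {t : PTree} (ht : t ∈ ST n) (w : Fin n → Fin k) :
    Compat t w ↔ ∃ F, StrictLab t F ∧ ∀ i, F (ownerAt ht i).1 = w i := by
  refine exists_congr fun F => and_congr_right fun _ => ?_
  have hlen := ((mem_ST_iff t n).1 ht).2
  constructor
  · intro h i
    have := congrArg (fun L => L[i.val]?) h
    simpa [getElem?_owners ht i] using this
  · intro h
    refine List.ext_getElem (by simpa using hlen) fun i h1 h2 => ?_
    have hi : i < n := by simpa using h2
    simpa [ownerAt] using h ⟨i, hi⟩

theorem omegaSkK_eq {t : PTree} (ht : t ∈ ST n) (k : ℕ) :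
    omegaSkK t k = Nat.card {w : Fin n → Fin k // Function.Surjective w ∧ Compat t w} := by
  have hs := ownerAt_surjective ht
  refine Nat.card_congr (Equiv.ofBijective (fun f => ⟨f.1 ∘ ownerAt ht, f.2.1.comp hs, ?_⟩) ⟨?_, ?_⟩)
  · rw [compat_iff ht]
    classical
    refine ⟨fun p => if h : IsInternalAt t p then f.1 ⟨p, h⟩ else 0, ?_, ?_⟩
    · intro v w hv hw hvw hne
      simp only [hv, hw, dif_pos]
      exact f.2.2 ⟨v, hv⟩ ⟨w, hw⟩ hvw (by simpa using hne)
    · intro i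
      simp [(ownerAt ht i).2]
  · intro f g h
    exact Subtype.ext (hs.injective_comp_right (congrArg Subtype.val h))
  · rintro ⟨w, hw, hc⟩
    obtain ⟨F, hF, hFw⟩ := (compat_iff ht w).1 hc
    choose s hs' using id hs
    have hval : ∀ v, ((w (s v) : Fin k) : ℕ) = F v.1 := fun v => by rw [← hFw, hs']
    have hcomp : ∀ i, w (s (ownerAt ht i)) = w i := fun i => Fin.ext (by rw [hval, hFw])
    refine ⟨⟨w ∘ s, fun y => ?_, fun v v' hv hne => ?_⟩, Subtype.ext (funext hcomp)⟩
    · obtain ⟨i, rfl⟩ := hw y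
      exact ⟨_, hcomp i⟩
    · rw [Fin.lt_def, Function.comp, Function.comp, hval, hval]
      exact hF _ _ v.2 v'.2 hv fun h => hne (Subtype.ext h)

theorem sameOwner_iff {t : PTree} (ht : t ∈ ST n) (i j : Fin n) :
    SameOwner t i j ↔ ownerAt ht i = ownerAt ht j := by
  simp only [SameOwner, ownsSector_iff, getElem?_owners ht, Option.some.injEq, Subtype.ext_iff]
  exact ⟨fun ⟨v, h1, h2⟩ => h1.trans h2.symm, fun h => ⟨_, h, rfl⟩⟩

theorem Compat.sameOwner_iff {k : ℕ} {t : PTree} (ht : t ∈ ST n) {w : Fin n → Fin k}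
    (h : Compat t w) (i j : Fin n) : SameOwner t i j ↔ LevelRel w i j := by
  rw [PTree.sameOwner_iff ht]
  wlog hij : i ≤ j generalizing i j
  · rw [eq_comm, this j i (le_of_not_ge hij)]
    exact ⟨LevelRel.symm, LevelRel.symm⟩
  obtain ⟨F, hF, hFw⟩ := (compat_iff ht w).1 h
  rw [Subtype.ext_iff, hF.owner_eq_iff (Fin.le_def.1 hij) (getElem?_owners ht i)
    (getElem?_owners ht j), levelRel_iff_of_le hij, hFw, hFw, Fin.val_inj]
  refine and_congr_right fun _ => ⟨fun H l h1 h2 => ?_, fun H l x h1 h2 hx => ?_⟩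
  · rw [Fin.le_def, ← hFw l]
    exact H l _ h1 h2 (getElem?_owners ht l)
  · have hl : l < n := lt_of_le_of_lt h2 j.2
    have hx' := getElem?_owners ht ⟨l, hl⟩
    obtain rfl : x = (ownerAt ht ⟨l, hl⟩).1 := Option.some_injective _ (hx.symm.trans hx')
    rw [hFw]
    exact H ⟨l, hl⟩ h1 h2

theorem Compat.treePartEq_iff {k : ℕ} {t : PTree} (ht : t ∈ ST n) {w : Fin n → Fin k}
    (h : Compat t w) (π : NPart n) : TreePartEq t π ↔ ∀ i j, π.Rel i j ↔ LevelRel w i j :=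
  forall₂_congr fun i j => by
    rw [h.sameOwner_iff ht]
    exact iff_comm

theorem existsUnique_compat {k : ℕ} (w : Fin n → Fin k) : ∃! t, t ∈ ST n ∧ Compat t w := by
  obtain ⟨t, F, h1, h2, h3⟩ := exists_map_owners_eq (List.ofFn fun i => (w i : ℕ))
  refine ⟨t, ⟨(mem_ST_iff t n).2 ⟨h1, by simpa using congrArg List.length h3⟩, F, h2, h3⟩, ?_⟩
  rintro t' ⟨ht', F', h2', h3'⟩
  exact eq_of_map_owners_eq ht'.1 h1 h2' h2 (h3'.trans h3.symm)

open Classical in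
theorem sum_omegaSkK (π : NPart n) (k : ℕ) :
    ∑ t ∈ (finite_ST n).toFinset with TreePartEq t π, omegaSkK t k = (levelWords π k).ncard := by
  choose T hT hTu using fun w : Fin n → Fin k => existsUnique_compat w
  have hw : (levelWords π k).ncard =
      (Finset.univ.filter fun w => w ∈ levelWords π k).card := by
    rw [← Set.ncard_coe_finset]
    simp
  rw [hw, Finset.card_eq_sum_card_fiberwise (f := T)
    (t := (finite_ST n).toFinset.filter fun t => TreePartEq t π)]
  · refine Finset.sum_congr rfl fun t ht => ?_
    simp only [Finset.mem_filter, Set.Finite.mem_toFinset] at ht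
    rw [omegaSkK_eq ht.1, Nat.card_eq_fintype_card, Fintype.card_subtype, Finset.filter_filter]
    congr 1
    refine Finset.filter_congr fun w _ => ?_
    constructor
    · rintro ⟨h1, h2⟩
      exact ⟨⟨h1, (h2.treePartEq_iff ht.1 π).1 ht.2⟩, (hTu w t ⟨ht.1, h2⟩).symm⟩
    · rintro ⟨h1, rfl⟩
      exact ⟨h1.1, (hT w).2⟩
  · intro w hw
    simp only [Finset.coe_filter, Finset.mem_univ, true_and, Set.mem_ofPred_eq] at hw
    simp only [Finset.coe_filter, Set.Finite.mem_toFinset, Set.mem_ofPred_eq]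
    exact ⟨(hT w).1, ((hT w).2.treePartEq_iff (hT w).1 π).2 hw.2⟩

theorem omegaSk_eq {t : PTree} (ht : t ∈ ST n) :
    omegaSk t = ∑ k ∈ Finset.Icc 1 n, ((-1 : ℂ) ^ (k + 1) / (k : ℂ)) * (omegaSkK t k : ℂ) := by
  refine Finset.sum_subset (Finset.Icc_subset_Icc_right (numInternal_le ht)) fun k h1 h2 => ?_
  simp only [Finset.mem_Icc] at h1 h2
  rw [omegaSkK_eq_zero ht (by omega), Nat.cast_zero, mul_zero]

end PTree

theorem omegaNest_eq_sum_Icc {n : ℕ} (σ : NPart n) :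
    omegaNest σ = ∑ k ∈ Finset.Icc 1 n, ((-1 : ℂ) ^ (k + 1) / (k : ℂ)) * (omegaNestK σ k : ℂ) := by
  have hcard : σ.parts.card ≤ n := by simpa using σ.card_parts_le_card
  refine Finset.sum_subset (Finset.Icc_subset_Icc_right hcard) fun k h1 h2 => ?_
  simp only [Finset.mem_Icc] at h1 h2
  rw [show omegaNestK σ k = 0 from card_surjective_subtype_eq_zero (by simp; omega) _,
    Nat.cast_zero, mul_zero]

/-- For every `n ≥ 1` and every noncrossing partition `π ∈ NC(n)`:
`Σ_{t ∈ ST(n), π(t) = π} ω(sk(t)) = Σ_{σ ∈ NC_irr(n), π ⊑ σ} (−1)^{|π|−|σ|} ω(t(σ))`. -/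
theorem alpha_eq_alternating_sum_irreducible
    (n : ℕ) (hn : 1 ≤ n) (π : NPart n) (hπ : IsNoncrossing π) :
    (∑ᶠ t ∈ {t ∈ PTree.ST n | TreePartEq t π}, PTree.omegaSk t) =
      ∑ᶠ σ ∈ {σ : NPart n | IsNoncrossing σ ∧ IsIrreducibleNC σ ∧ SqSubseteq π σ},
        (-1 : ℂ) ^ (π.parts.card - σ.parts.card) * omegaNest σ := by
  classical
  have hL : (∑ᶠ t ∈ {t ∈ PTree.ST n | TreePartEq t π}, PTree.omegaSk t) =
      ∑ t ∈ (PTree.finite_ST n).toFinset with TreePartEq t π, PTree.omegaSk t := by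
    rw [← finsum_mem_coe_finset]
    simp
  have hR : (∑ᶠ σ ∈ {σ : NPart n | IsNoncrossing σ ∧ IsIrreducibleNC σ ∧ SqSubseteq π σ},
        (-1 : ℂ) ^ (π.parts.card - σ.parts.card) * omegaNest σ) =
      ∑ σ : NPart n with IsNoncrossing σ ∧ SqSubseteq π σ,
        (-1 : ℂ) ^ (π.parts.card - σ.parts.card) * omegaNest σ := by
    rw [finsum_mem_eq_finite_toFinset_sum _ (Set.toFinite _)]
    refine Finset.sum_subset (fun σ => ?_) fun σ h1 h2 => ?_
    · simp only [Set.Finite.mem_toFinset, Set.mem_ofPred_eq, Finset.mem_filter, Finset.mem_univ,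
        true_and]
      tauto
    · simp only [Set.Finite.mem_toFinset, Set.mem_ofPred_eq, Finset.mem_filter, Finset.mem_univ,
        true_and] at h1 h2
      rw [omegaNest_eq_zero hn h1.1 (by tauto), mul_zero]
  rw [hL, hR, Finset.sum_congr rfl fun t ht => PTree.omegaSk_eq
    ((PTree.finite_ST n).mem_toFinset.1 (Finset.mem_filter.1 ht).1), Finset.sum_comm]
  simp only [omegaNest_eq_sum_Icc, Finset.mul_sum]
  rw [Finset.sum_comm (s := Finset.univ.filter _)]
  refine Finset.sum_congr rfl fun k _ => ?_
  rw [← Finset.mul_sum, ← Nat.cast_sum, PTree.sum_omegaSkK, ← sum_sign_mul_omegaNestK,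
    Finset.mul_sum]
  exact Finset.sum_congr rfl fun σ _ => by ring
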